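/- arXiv:math/0511066 — 8 statements merged into one kernel-verified Lean document; each statement's English description precedes it below -/
import Mathlib

section
/- Let μ ≥ 0, let S : ℤ³ → ℂ satisfy S(k,m,n) = 0 whenever kmn = 0, S(k,m,n) = S(k,n,m), S(k,m,n) = S(m,n,k), S(k,m,n) = conj(S(−k,−m,−n)), and |S(k,m,n)| ≤ C·min{|k|^μ, |m|^μ, |n|^μ} for all k,m,n ∈ ℤ. Let s > μ + 3/2, let C_s be a constant such that |k|k|^{2s} + m|m|^{2s} + n|n|^{2s}| ≤ C_s(|k|^s|m|^s|n| + |n|^s|k|^s|m| + |m|^s|n|^s|k|) for all real k,m,n with k+m+n = 0, and set K_s = C·C_s·M_{s−μ−1} where M_σ = (2 Σ_{n=1}^∞ n^{−2σ})^{1/2}. Suppose N ∈ ℕ and û : ℤ × ℝ → ℂ is differentiable in t, satisfies û(k,t) = 0 for |k| > N, û(0,t) = 0, û(−k,t) = conj(û(k,t)), and solves the Galerkin system ∂_t û(k,t) + ik Σ_{n∈ℤ} S(−k, k−n, n) û(k−n,t) û(n,t) = 0 for all |k| ≤ N. Then the squared Sobolev norm E(t) = Σ_{k∈ℤ} |k|^{2s}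 |û(k,t)|² satisfies |E′(t)| ≤ 2 K_s E(t)^{3/2} for all t. -/
open scoped BigOperators

/-- `M_σ = (2 Σ_{n=1}^∞ n^{−2σ})^{1/2}`. -/
noncomputable def Mconst (σ : ℝ) : ℝ :=
  Real.sqrt (2 * ∑' n : ℕ, ((n : ℝ) + 1) ^ (-(2 * σ)))

/-!
Along the Galerkin flow, `E'` is a sum over the triads `k + m + n = 0` of `k |k|^{2s}` times an
expression invariant under cyclic permutations of `(k, m, n)`, so `k |k|^{2s}` may be replaced by a
third of its cyclic sum. The bound defining `C_s` then gives the weight `|·|^s` to two of the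
modes of each triad and only one derivative to the third. Since `S` costs at most `μ` derivatives
on whichever mode we like, Young's inequality `ℓ² * ℓ² * ℓ¹` bounds the sum by `E` times the `ℓ¹`
norm of `|k|^{μ+1} û(k)`, which Cauchy–Schwarz bounds by `M_{s-μ-1} E^{1/2}`.
-/

section LatticeSums

theorem hasSum_int_abs_rpow_neg {σ : ℝ} (hσ : 1 / 2 < σ) :
    HasSum (fun n : ℤ => |(n : ℝ)| ^ (-(2 * σ))) (Mconst σ ^ 2) := by
  have hsum : Summable fun n : ℕ => ((n : ℝ) + 1) ^ (-(2 * σ)) := by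
    simpa using (summable_nat_add_iff 1).2
      (Real.summable_nat_rpow (p := -(2 * σ)) |>.2 (by linarith))
  have habs (n : ℕ) : |(n : ℝ) + 1| = n + 1 := abs_of_nonneg (by positivity)
  have hzero : |((0 : ℤ) : ℝ)| ^ (-(2 * σ)) = 0 := by
    rw [Int.cast_zero, abs_zero, Real.zero_rpow (by linarith)]
  have hint := HasSum.of_add_one_of_neg_add_one (f := fun n : ℤ => |(n : ℝ)| ^ (-(2 * σ)))
    (by simpa [habs] using hsum.hasSum)
    (by simpa only [Int.cast_neg, Int.cast_add, Int.cast_natCast, Int.cast_one, abs_neg, habs]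
      using hsum.hasSum)
  rw [Mconst, Real.sq_sqrt (mul_nonneg zero_le_two (tsum_nonneg fun n => by positivity)),
    two_mul (∑' n : ℕ, _)]
  simpa only [hzero, add_zero] using hint

theorem sum_abs_rpow_neg_mul_le {σ : ℝ} (hσ : 1 / 2 < σ) (F : Finset ℤ) (a : ℤ → ℝ) :
    ∑ n ∈ F, |(n : ℝ)| ^ (-σ) * a n ≤ Mconst σ * √(∑ n ∈ F, a n ^ 2) := by
  refine (Real.sum_mul_le_sqrt_mul_sqrt F _ a).trans
    (mul_le_mul_of_nonneg_right ?_ (Real.sqrt_nonneg _))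
  have hsq (n : ℤ) : (|(n : ℝ)| ^ (-σ)) ^ 2 = |(n : ℝ)| ^ (-(2 * σ)) := by
    rw [← Real.rpow_mul_natCast (abs_nonneg _)]
    ring_nf
  simp only [hsq]
  exact Real.sqrt_le_iff.2 ⟨Real.sqrt_nonneg _,
    sum_le_hasSum F (fun n _ => by positivity) (hasSum_int_abs_rpow_neg hσ)⟩

end LatticeSums

section TriadSums

theorem sum_sum_sum_rotate {ι R : Type*} [AddCommMonoid R] (F : Finset ι) (f : ι → ι → ι → R) :
    ∑ k ∈ F, ∑ m ∈ F, ∑ n ∈ F, f m n k = ∑ k ∈ F, ∑ m ∈ F, ∑ n ∈ F, f k m n := by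
  rw [Finset.sum_comm]
  exact Finset.sum_congr rfl fun m _ => Finset.sum_comm

theorem three_mul_sum_mul_of_cyclic {ι R : Type*} [CommSemiring R] (F : Finset ι) (g : ι → R)
    {w : ι → ι → ι → R} (hw : ∀ k m n, w k m n = w m n k) :
    3 * ∑ k ∈ F, ∑ m ∈ F, ∑ n ∈ F, g k * w k m n =
      ∑ k ∈ F, ∑ m ∈ F, ∑ n ∈ F, (g k + g m + g n) * w k m n := by
  have hm : ∑ k ∈ F, ∑ m ∈ F, ∑ n ∈ F, g m * w k m n =
      ∑ k ∈ F, ∑ m ∈ F, ∑ n ∈ F, g k * w k m n := by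
    simpa only [← hw] using sum_sum_sum_rotate F fun k m n => g k * w k m n
  have hn : ∑ k ∈ F, ∑ m ∈ F, ∑ n ∈ F, g n * w k m n =
      ∑ k ∈ F, ∑ m ∈ F, ∑ n ∈ F, g m * w k m n := by
    simpa only [← hw] using sum_sum_sum_rotate F fun k m n => g m * w k m n
  simp only [add_mul, Finset.sum_add_distrib, hn, hm]
  ring

variable {G R : Type*} [AddCommGroup G] [DecidableEq G]
  [CommRing R] [LinearOrder R] [IsStrictOrderedRing R]

theorem sum_triad_mul_le_sum_mul_sum (F : Finset G) {f b : G → R}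
    (hf : ∀ k, 0 ≤ f k) (hb : ∀ n, 0 ≤ b n) :
    ∑ k ∈ F, ∑ m ∈ F, ∑ n ∈ F, (if k + m + n = 0 then f k * b n else 0) ≤
      (∑ k ∈ F, f k) * ∑ n ∈ F, b n := by
  rw [Finset.sum_mul_sum]
  refine Finset.sum_le_sum fun k _ => ?_
  rw [Finset.sum_comm]
  refine Finset.sum_le_sum fun n _ => ?_
  have hm (m : G) : k + m + n = 0 ↔ m = -(k + n) := by
    rw [add_right_comm, add_comm, add_eq_zero_iff_eq_neg]
  simp only [hm, Finset.sum_ite_eq']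
  split_ifs
  · exact le_rfl
  · exact mul_nonneg (hf k) (hb n)

theorem sum_triad_mul_mul_le_sum_sq_mul_sum (F : Finset G) (a : G → R) {b : G → R}
    (hb : ∀ n, 0 ≤ b n) :
    ∑ k ∈ F, ∑ m ∈ F, ∑ n ∈ F, (if k + m + n = 0 then a k * a m * b n else 0) ≤
      (∑ k ∈ F, a k ^ 2) * ∑ n ∈ F, b n := by
  have hfst := sum_triad_mul_le_sum_mul_sum F (fun k => sq_nonneg (a k)) hb
  have hsnd : ∑ k ∈ F, ∑ m ∈ F, ∑ n ∈ F, (if k + m + n = 0 then a m ^ 2 * b n else 0) ≤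
      (∑ k ∈ F, a k ^ 2) * ∑ n ∈ F, b n := by
    rw [Finset.sum_comm]
    simpa only [add_comm] using hfst
  have hamgm : 2 * ∑ k ∈ F, ∑ m ∈ F, ∑ n ∈ F, (if k + m + n = 0 then a k * a m * b n else 0) ≤
      ∑ k ∈ F, ∑ m ∈ F, ∑ n ∈ F, (if k + m + n = 0 then a k ^ 2 * b n else 0) +
      ∑ k ∈ F, ∑ m ∈ F, ∑ n ∈ F, (if k + m + n = 0 then a m ^ 2 * b n else 0) := by
    simp only [Finset.mul_sum, ← Finset.sum_add_distrib]
    refine Finset.sum_le_sum fun k _ => Finset.sum_le_sum fun m _ =>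
      Finset.sum_le_sum fun n _ => ?_
    split_ifs
    · linear_combination mul_le_mul_of_nonneg_right (two_mul_le_add_sq (a k) (a m)) (hb n)
    · simp
  linarith

end TriadSums

section Amplitudes

/-- The squared homogeneous Sobolev norm `‖v‖_s²` of the function with Fourier coefficients `v`. -/
noncomputable def sobolevEnergy (s : ℝ) (v : ℤ → ℂ) : ℝ :=
  ∑' k : ℤ, |(k : ℝ)| ^ (2 * s) * ‖v k‖ ^ 2

/-- The modulus `|k|^r |v(k)|` of the Fourier coefficients of `|∂|^r v`. -/
noncomputable def sobolevAmplitude (r : ℝ) (v : ℤ → ℂ) (k : ℤ) : ℝ :=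
  |(k : ℝ)| ^ r * ‖v k‖

theorem sobolevAmplitude_nonneg (r : ℝ) (v : ℤ → ℂ) (k : ℤ) : 0 ≤ sobolevAmplitude r v k := by
  unfold sobolevAmplitude
  positivity

theorem sobolevEnergy_nonneg (s : ℝ) (v : ℤ → ℂ) : 0 ≤ sobolevEnergy s v :=
  tsum_nonneg fun k => by positivity

variable {F : Finset ℤ} {v : ℤ → ℂ}

theorem sobolevEnergy_eq_sum (s : ℝ) (hv : ∀ k ∉ F, v k = 0) :
    sobolevEnergy s v = ∑ k ∈ F, |(k : ℝ)| ^ (2 * s) * ‖v k‖ ^ 2 :=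
  tsum_eq_sum fun k hk => by simp [hv k hk]

theorem sum_sobolevAmplitude_sq (s : ℝ) (hv : ∀ k ∉ F, v k = 0) :
    ∑ k ∈ F, sobolevAmplitude s v k ^ 2 = sobolevEnergy s v := by
  rw [sobolevEnergy_eq_sum s hv]
  refine Finset.sum_congr rfl fun k _ => ?_
  rw [sobolevAmplitude, mul_pow, ← Real.rpow_mul_natCast (abs_nonneg _), Nat.cast_ofNat,
    mul_comm s]

theorem sobolevAmplitude_eq_rpow_mul (p q : ℝ) (hv0 : v 0 = 0) (k : ℤ) :
    sobolevAmplitude p v k = |(k : ℝ)| ^ (-(q - p)) * sobolevAmplitude q v k := by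
  obtain rfl | hk := eq_or_ne k 0
  · simp [sobolevAmplitude, hv0]
  · have hk' : 0 < |(k : ℝ)| := abs_pos.2 (Int.cast_ne_zero.2 hk)
    rw [sobolevAmplitude, sobolevAmplitude, ← mul_assoc, ← Real.rpow_add hk', neg_sub,
      sub_add_cancel]

theorem sum_sobolevAmplitude_le {p q : ℝ} (hpq : 1 / 2 < q - p) (hv0 : v 0 = 0)
    (hv : ∀ k ∉ F, v k = 0) :
    ∑ k ∈ F, sobolevAmplitude p v k ≤ Mconst (q - p) * √(sobolevEnergy q v) := by
  simp only [sobolevAmplitude_eq_rpow_mul p q hv0, ← sum_sobolevAmplitude_sq q hv]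
  exact sum_abs_rpow_neg_mul_le hpq F _

end Amplitudes

section TriadInteraction

/-- The odd weight `x |x|^{2s}`: one derivative from the equation and `2s` from the norm. -/
noncomputable def fluxWeight (s x : ℝ) : ℝ :=
  x * |x| ^ (2 * s)

/-- `Cs` is an admissible constant `C_s` in the estimate of the cyclic sum of `x |x|^{2s}`. -/
def IsFluxWeightConst (s Cs : ℝ) : Prop :=
  ∀ k m n : ℝ, k + m + n = 0 →
    |fluxWeight s k + fluxWeight s m + fluxWeight s n| ≤
      Cs * (|k| ^ s * |m| ^ s * |n| + |n| ^ s * |k| ^ s * |m| + |m| ^ s * |n| ^ s * |k|)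

/-- The interaction of the modes `k`, `m`, `n` through the kernel `S`, which is nonzero only on
triads `k + m + n = 0`. -/
noncomputable def triadInteraction (S : ℤ → ℤ → ℤ → ℂ) (v : ℤ → ℂ) (k m n : ℤ) : ℂ :=
  if k + m + n = 0 then S k m n * v k * v m * v n else 0

/-- The sum of the triad interactions over the modes in `F`, weighted by `k |k|^{2s}`; it governs
the growth of the Sobolev energy. -/
noncomputable def energyFlux (S : ℤ → ℤ → ℤ → ℂ) (s : ℝ) (F : Finset ℤ) (v : ℤ → ℂ) : ℂ :=
  ∑ k ∈ F, ∑ m ∈ F, ∑ n ∈ F, (fluxWeight s k : ℂ) * triadInteraction S v k m n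

variable {S : ℤ → ℤ → ℤ → ℂ} {μ C s Cs : ℝ} {F : Finset ℤ} {v : ℤ → ℂ}

theorem IsFluxWeightConst.nonneg (hCs : IsFluxWeightConst s Cs) : 0 ≤ Cs := by
  have h := (abs_nonneg _).trans (hCs 1 1 (-2) (by norm_num))
  exact nonneg_of_mul_nonneg_left h (by norm_num; positivity)

theorem triadInteraction_rotate (hScyc : ∀ k m n, S k m n = S m n k) (k m n : ℤ) :
    triadInteraction S v k m n = triadInteraction S v m n k := by
  have hrot : m + n + k = 0 ↔ k + m + n = 0 := by lia
  simp only [triadInteraction, hrot, hScyc k m n]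
  split_ifs
  · ring
  · rfl

theorem abs_mul_mul_norm_le_sobolevAmplitude {k : ℤ} (hk : k ≠ 0) {P : ℝ}
    (hP : P ≤ |(k : ℝ)| ^ μ) :
    |(k : ℝ)| * P * ‖v k‖ ≤ sobolevAmplitude (μ + 1) v k := by
  rw [sobolevAmplitude, Real.rpow_add_one (abs_ne_zero.2 (Int.cast_ne_zero.2 hk)),
    mul_comm (|(k : ℝ)| ^ μ)]
  gcongr

theorem norm_fluxWeight_mul_triadInteraction_le_of_le {k m n : ℤ} {P : ℝ} (h : k + m + n = 0)
    (hk : k ≠ 0) (hm : m ≠ 0) (hn : n ≠ 0) (hPk : P ≤ |(k : ℝ)| ^ μ) (hPm : P ≤ |(m : ℝ)| ^ μ)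
    (hPn : P ≤ |(n : ℝ)| ^ μ) (hC : 0 ≤ C) (hS : ‖S k m n‖ ≤ C * P)
    (hCs : IsFluxWeightConst s Cs) :
    ‖((fluxWeight s k : ℂ) + fluxWeight s m + fluxWeight s n) * triadInteraction S v k m n‖ ≤
      C * Cs * (sobolevAmplitude s v k * sobolevAmplitude s v m * sobolevAmplitude (μ + 1) v n +
        sobolevAmplitude s v n * sobolevAmplitude s v k * sobolevAmplitude (μ + 1) v m +
        sobolevAmplitude s v m * sobolevAmplitude s v n * sobolevAmplitude (μ + 1) v k) := by
  have ha := sobolevAmplitude_nonneg s v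
  have hCs0 := hCs.nonneg
  have hweight := hCs k m n (mod_cast h)
  rw [triadInteraction, if_pos h, norm_mul, norm_mul, norm_mul, norm_mul, ← Complex.ofReal_add,
    ← Complex.ofReal_add, Complex.norm_real, Real.norm_eq_abs]
  calc _ ≤ Cs * (|(k : ℝ)| ^ s * |(m : ℝ)| ^ s * |(n : ℝ)| +
          |(n : ℝ)| ^ s * |(k : ℝ)| ^ s * |(m : ℝ)| +
          |(m : ℝ)| ^ s * |(n : ℝ)| ^ s * |(k : ℝ)|) * (C * P * ‖v k‖ * ‖v m‖ * ‖v n‖) := by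
        gcongr
    _ = C * Cs *
        (sobolevAmplitude s v k * sobolevAmplitude s v m * (|(n : ℝ)| * P * ‖v n‖) +
          sobolevAmplitude s v n * sobolevAmplitude s v k * (|(m : ℝ)| * P * ‖v m‖) +
          sobolevAmplitude s v m * sobolevAmplitude s v n * (|(k : ℝ)| * P * ‖v k‖)) := by
        simp only [sobolevAmplitude]
        ring
    _ ≤ _ := by
        gcongr C * Cs * (?_ + ?_ + ?_)
        · exact mul_le_mul_of_nonneg_left (abs_mul_mul_norm_le_sobolevAmplitude hn hPn)
            (mul_nonneg (ha k) (ha m))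
        · exact mul_le_mul_of_nonneg_left (abs_mul_mul_norm_le_sobolevAmplitude hm hPm)
            (mul_nonneg (ha n) (ha k))
        · exact mul_le_mul_of_nonneg_left (abs_mul_mul_norm_le_sobolevAmplitude hk hPk)
            (mul_nonneg (ha m) (ha n))

theorem norm_fluxWeight_mul_triadInteraction_le (hC : 0 ≤ C)
    (hSbound : ∀ k m n : ℤ, k ≠ 0 → m ≠ 0 → n ≠ 0 → ‖S k m n‖ ≤
      C * min (|(k : ℝ)| ^ μ) (min (|(m : ℝ)| ^ μ) (|(n : ℝ)| ^ μ)))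
    (hCs : IsFluxWeightConst s Cs) (hv0 : v 0 = 0) {k m n : ℤ} (h : k + m + n = 0) :
    ‖((fluxWeight s k : ℂ) + fluxWeight s m + fluxWeight s n) * triadInteraction S v k m n‖ ≤
      C * Cs * (sobolevAmplitude s v k * sobolevAmplitude s v m * sobolevAmplitude (μ + 1) v n +
        sobolevAmplitude s v n * sobolevAmplitude s v k * sobolevAmplitude (μ + 1) v m +
        sobolevAmplitude s v m * sobolevAmplitude s v n * sobolevAmplitude (μ + 1) v k) := by
  by_cases hne : k ≠ 0 ∧ m ≠ 0 ∧ n ≠ 0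
  · obtain ⟨hk, hm, hn⟩ := hne
    exact norm_fluxWeight_mul_triadInteraction_le_of_le h hk hm hn (min_le_left _ _)
      ((min_le_right _ _).trans (min_le_left _ _)) ((min_le_right _ _).trans (min_le_right _ _))
      hC (hSbound k m n hk hm hn) hCs
  · have hzero : triadInteraction S v k m n = 0 := by
      rw [triadInteraction, if_pos h]
      grind
    rw [hzero, mul_zero, norm_zero]
    have hCs0 := hCs.nonneg
    simp only [sobolevAmplitude]
    positivity

theorem norm_energyFlux_le (hScyc : ∀ k m n, S k m n = S m n k) (hC : 0 ≤ C)
    (hSbound : ∀ k m n : ℤ, k ≠ 0 → m ≠ 0 → n ≠ 0 → ‖S k m n‖ ≤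
      C * min (|(k : ℝ)| ^ μ) (min (|(m : ℝ)| ^ μ) (|(n : ℝ)| ^ μ)))
    (hCs : IsFluxWeightConst s Cs) (hv0 : v 0 = 0) :
    ‖energyFlux S s F v‖ ≤ C * Cs *
      ((∑ k ∈ F, sobolevAmplitude s v k ^ 2) * ∑ k ∈ F, sobolevAmplitude (μ + 1) v k) := by
  set a := sobolevAmplitude s v
  set b := sobolevAmplitude (μ + 1) v
  let T (k m n : ℤ) : ℝ := if k + m + n = 0 then a k * a m * b n else 0
  have hT : ∑ k ∈ F, ∑ m ∈ F, ∑ n ∈ F, T k m n ≤ (∑ k ∈ F, a k ^ 2) * ∑ k ∈ F, b k :=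
    sum_triad_mul_mul_le_sum_sq_mul_sum F a (sobolevAmplitude_nonneg (μ + 1) v)
  have hterm (k m n : ℤ) :
      ‖((fluxWeight s k : ℂ) + fluxWeight s m + fluxWeight s n) * triadInteraction S v k m n‖ ≤
        C * Cs * (T k m n + T n k m + T m n k) := by
    have hnkm : n + k + m = 0 ↔ k + m + n = 0 := by lia
    have hmnk : m + n + k = 0 ↔ k + m + n = 0 := by lia
    simp only [T, hnkm, hmnk]
    split_ifs with h
    · exact norm_fluxWeight_mul_triadInteraction_le hC hSbound hCs hv0 h
    · simp [triadInteraction, h]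
  have hthree : ‖3 * energyFlux S s F v‖ ≤
      C * Cs * (3 * ∑ k ∈ F, ∑ m ∈ F, ∑ n ∈ F, T k m n) := by
    rw [energyFlux, three_mul_sum_mul_of_cyclic F _ (triadInteraction_rotate hScyc)]
    refine (norm_sum_le_of_le F fun k _ => norm_sum_le_of_le F fun m _ =>
      norm_sum_le_of_le F fun n _ => hterm k m n).trans_eq ?_
    simp only [← Finset.mul_sum, Finset.sum_add_distrib]
    rw [← sum_sum_sum_rotate F fun k m n => T n k m, sum_sum_sum_rotate F T]
    ring
  rw [norm_mul, Complex.norm_ofNat, mul_left_comm] at hthree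
  exact (le_of_mul_le_mul_left hthree three_pos).trans
    (mul_le_mul_of_nonneg_left hT (mul_nonneg hC hCs.nonneg))

theorem norm_energyFlux_le_rpow_sobolevEnergy (hScyc : ∀ k m n, S k m n = S m n k) (hC : 0 ≤ C)
    (hSbound : ∀ k m n : ℤ, k ≠ 0 → m ≠ 0 → n ≠ 0 → ‖S k m n‖ ≤
      C * min (|(k : ℝ)| ^ μ) (min (|(m : ℝ)| ^ μ) (|(n : ℝ)| ^ μ)))
    (hs : μ + 3 / 2 < s) (hCs : IsFluxWeightConst s Cs) (hv0 : v 0 = 0) (hv : ∀ k ∉ F, v k = 0) :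
    ‖energyFlux S s F v‖ ≤
      C * Cs * Mconst (s - μ - 1) * sobolevEnergy s v ^ ((3 : ℝ) / 2) := by
  have hE := sobolevEnergy_nonneg s v
  have hCs0 := hCs.nonneg
  have hpow : sobolevEnergy s v ^ ((3 : ℝ) / 2) = sobolevEnergy s v * √(sobolevEnergy s v) := by
    rw [show (3 : ℝ) / 2 = 1 + 1 / 2 by norm_num, Real.rpow_add_of_nonneg hE (by norm_num)
      (by norm_num), Real.rpow_one, Real.sqrt_eq_rpow]
  calc ‖energyFlux S s F v‖
      ≤ C * Cs * (sobolevEnergy s v * ∑ k ∈ F, sobolevAmplitude (μ + 1) v k) := by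
        simpa only [sum_sobolevAmplitude_sq s hv] using
          norm_energyFlux_le (F := F) hScyc hC hSbound hCs hv0
    _ ≤ C * Cs * (sobolevEnergy s v * (Mconst (s - (μ + 1)) * √(sobolevEnergy s v))) := by
        gcongr
        exact sum_sobolevAmplitude_le (by linarith) hv0 hv
    _ = C * Cs * Mconst (s - μ - 1) * sobolevEnergy s v ^ ((3 : ℝ) / 2) := by
        rw [hpow, sub_add_eq_sub_sub]
        ring

end TriadInteraction

section EnergyIdentity

/-- The `k`-th coefficient of the right-hand side of the Galerkin system
`∂ₜ û(k) = -i k ∑ₙ S(-k, k - n, n) û(k - n) û(n)`. -/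
noncomputable def galerkinField (S : ℤ → ℤ → ℤ → ℂ) (v : ℤ → ℂ) (k : ℤ) : ℂ :=
  -(Complex.I * (k : ℂ) * ∑' n : ℤ, S (-k) (k - n) n * v (k - n) * v n)

variable {S : ℤ → ℤ → ℤ → ℂ} {F : Finset ℤ} {v : ℤ → ℂ}

theorem sum_sum_triadInteraction_neg (hv : ∀ k ∉ F, v k = 0)
    (hvconj : ∀ k, v (-k) = starRingEnd ℂ (v k)) (k : ℤ) :
    ∑ m ∈ F, ∑ n ∈ F, triadInteraction S v (-k) m n =
      starRingEnd ℂ (v k) * ∑' n : ℤ, S (-k) (k - n) n * v (k - n) * v n := by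
  rw [tsum_eq_sum (s := F) fun n hn => by simp [hv n hn], Finset.sum_comm, Finset.mul_sum]
  refine Finset.sum_congr rfl fun n _ => ?_
  have hm (m : ℤ) : -k + m + n = 0 ↔ m = k - n := by lia
  simp only [triadInteraction, hm, Finset.sum_ite_eq', hvconj]
  split_ifs with h
  · ring
  · simp [hv _ h]

theorem rpow_mul_inner_galerkinField (s : ℝ) (hv : ∀ k ∉ F, v k = 0)
    (hvconj : ∀ k, v (-k) = starRingEnd ℂ (v k)) (k : ℤ) :
    |(k : ℝ)| ^ (2 * s) * inner ℝ (v k) (galerkinField S v k) =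
      (Complex.I * ∑ m ∈ F, ∑ n ∈ F,
        (fluxWeight s (-k : ℤ) : ℂ) * triadInteraction S v (-k) m n).re := by
  simp only [← Finset.mul_sum]
  rw [sum_sum_triadInteraction_neg hv hvconj, Complex.inner, ← Complex.re_ofReal_mul,
    galerkinField, fluxWeight, Int.cast_neg, abs_neg]
  push_cast
  ring_nf

theorem sum_rpow_mul_inner_galerkinField (s : ℝ) (hF : ∀ k, -k ∈ F ↔ k ∈ F)
    (hv : ∀ k ∉ F, v k = 0) (hvconj : ∀ k, v (-k) = starRingEnd ℂ (v k)) :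
    ∑ k ∈ F, |(k : ℝ)| ^ (2 * s) * inner ℝ (v k) (galerkinField S v k) =
      (Complex.I * energyFlux S s F v).re := by
  simp only [rpow_mul_inner_galerkinField s hv hvconj]
  rw [← Complex.re_sum, ← Finset.mul_sum, energyFlux]
  congr 2
  exact Finset.sum_equiv (Equiv.neg ℤ) (fun k => (hF k).symm) fun k _ => rfl

theorem hasDerivAt_sobolevEnergy (s : ℝ) (hF : ∀ k, -k ∈ F ↔ k ∈ F) {u : ℝ → ℤ → ℂ} {t : ℝ}
    (hsupp : ∀ τ, ∀ k ∉ F, u τ k = 0) (hconj : ∀ k, u t (-k) = starRingEnd ℂ (u t k))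
    (heq : ∀ k ∈ F, HasDerivAt (fun τ => u τ k) (galerkinField S (u t) k) t) :
    HasDerivAt (fun τ => sobolevEnergy s (u τ))
      (2 * (Complex.I * energyFlux S s F (u t)).re) t := by
  simp only [sobolevEnergy_eq_sum s (hsupp _)]
  rw [← sum_rpow_mul_inner_galerkinField s hF (hsupp t) hconj, Finset.mul_sum]
  refine HasDerivAt.fun_sum fun k hk => ?_
  rw [mul_left_comm]
  exact (heq k hk).norm_sq.const_mul _

end EnergyIdentity

/-- The kernel is bounded on nonzero modes only, so that the convention `0 ^ μ = 0` for `μ < 0` does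
not enter. -/
theorem galerkin_energy_estimate_general
    {μ : ℝ} {S : ℤ → ℤ → ℤ → ℂ} (hScyc : ∀ k m n : ℤ, S k m n = S m n k) {C : ℝ}
    (hSbound : ∀ k m n : ℤ, k ≠ 0 → m ≠ 0 → n ≠ 0 → ‖S k m n‖ ≤
      C * min (|(k : ℝ)| ^ μ) (min (|(m : ℝ)| ^ μ) (|(n : ℝ)| ^ μ)))
    {s : ℝ} (hs : μ + 3 / 2 < s) {Cs : ℝ} (hCs : IsFluxWeightConst s Cs)
    {F : Finset ℤ} (hF : ∀ k, -k ∈ F ↔ k ∈ F) {u : ℝ → ℤ → ℂ} {t : ℝ}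
    (hsupp : ∀ τ, ∀ k ∉ F, u τ k = 0) (hzero : u t 0 = 0)
    (hconj : ∀ k, u t (-k) = starRingEnd ℂ (u t k))
    (heq : ∀ k ∈ F, HasDerivAt (fun τ => u τ k) (galerkinField S (u t) k) t) :
    ∃ e : ℝ, HasDerivAt (fun τ => sobolevEnergy s (u τ)) e t ∧
      |e| ≤ 2 * (C * Cs * Mconst (s - μ - 1)) * sobolevEnergy s (u t) ^ ((3 : ℝ) / 2) := by
  have hC : 0 ≤ C := (norm_nonneg _).trans (by simpa using hSbound 1 1 1)
  refine ⟨_, hasDerivAt_sobolevEnergy s hF hsupp hconj heq, ?_⟩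
  calc |2 * (Complex.I * energyFlux S s F (u t)).re|
      ≤ 2 * ‖Complex.I * energyFlux S s F (u t)‖ := by
        rw [abs_mul, abs_two]
        gcongr
        exact Complex.abs_re_le_norm _
    _ = 2 * ‖energyFlux S s F (u t)‖ := by rw [norm_mul, Complex.norm_I, one_mul]
    _ ≤ _ := by
        rw [mul_assoc 2]
        gcongr
        exact norm_energyFlux_le_rpow_sobolevEnergy hScyc hC hSbound hs hCs hzero (hsupp t)

/-- A priori estimate for the Galerkin approximations: the squared Sobolev norm
`E(t) = Σ_k |k|^{2s} |û(k,t)|²` satisfies `|E′(t)| ≤ 2 K_s E(t)^{3/2}`. -/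
theorem galerkin_energy_estimate
    (μ : ℝ) (hμ : 0 ≤ μ) (S : ℤ → ℤ → ℤ → ℂ)
    (hS0 : ∀ k m n : ℤ, k * m * n = 0 → S k m n = 0)
    (hSsym : ∀ k m n : ℤ, S k m n = S k n m)
    (hScyc : ∀ k m n : ℤ, S k m n = S m n k)
    (hSreal : ∀ k m n : ℤ, S k m n = starRingEnd ℂ (S (-k) (-m) (-n)))
    (C : ℝ) (hC : 0 < C)
    (hSbound : ∀ k m n : ℤ, ‖S k m n‖ ≤
      C * min (|(k : ℝ)| ^ μ) (min (|(m : ℝ)| ^ μ) (|(n : ℝ)| ^ μ)))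
    (s : ℝ) (hs : μ + 3 / 2 < s)
    (Cs : ℝ)
    (hCs : ∀ k m n : ℝ, k + m + n = 0 →
      |k * |k| ^ (2 * s) + m * |m| ^ (2 * s) + n * |n| ^ (2 * s)| ≤
        Cs * (|k| ^ s * |m| ^ s * |n| + |n| ^ s * |k| ^ s * |m| + |m| ^ s * |n| ^ s * |k|))
    (Ks : ℝ) (hKs : Ks = C * Cs * Mconst (s - μ - 1))
    (N : ℕ) (u : ℝ → ℤ → ℂ)
    (hsupp : ∀ t : ℝ, ∀ k : ℤ, (N : ℤ) < |k| → u t k = 0)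
    (hzero : ∀ t : ℝ, u t 0 = 0)
    (hconj : ∀ t : ℝ, ∀ k : ℤ, u t (-k) = starRingEnd ℂ (u t k))
    (heq : ∀ t : ℝ, ∀ k : ℤ, |k| ≤ (N : ℤ) →
      HasDerivAt (fun τ => u τ k)
        (-(Complex.I * (k : ℂ) * ∑' n : ℤ, S (-k) (k - n) n * u t (k - n) * u t n)) t) :
    ∀ t : ℝ, ∃ e : ℝ,
      HasDerivAt (fun τ => ∑' k : ℤ, |(k : ℝ)| ^ (2 * s) * ‖u τ k‖ ^ 2) e t ∧
      |e| ≤ 2 * Ks * (∑' k : ℤ, |(k : ℝ)| ^ (2 * s) * ‖u t k‖ ^ 2) ^ ((3 : ℝ) / 2) := by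
  have hmem (k : ℤ) : k ∈ Finset.Icc (-(N : ℤ)) N ↔ |k| ≤ N := by rw [Finset.mem_Icc, abs_le]
  intro t
  subst hKs
  exact galerkin_energy_estimate_general hScyc (fun k m n _ _ _ => hSbound k m n) hs hCs
    (fun k => by rw [hmem, hmem, abs_neg]) (fun τ k hk => hsupp τ k (by rwa [hmem, not_le] at hk))
    (hzero t) (hconj t) fun k hk => heq t k ((hmem k).1 hk)
end

section
/- Let μ ≥ 0 and let S : ℤ³ → ℂ satisfy S(k,m,n) = 0 whenever kmn = 0, S(k,m,n) = S(k,n,m), S(k,m,n) = S(m,n,k), S(k,m,n) = conj(S(−k,−m,−n)), and |S(k,m,n)| ≤ C·min{|k|^μ, |m|^μ, |n|^μ} for all k,m,n ∈ ℤ. Let s > μ + 3/2 and let I be an open time interval containing 0. If u, v ∈ C(I; Ḣ^s(𝕋)) ∩ C¹(I; Ḣ^{s−1}(𝕋)) both solve u_t + a(u,u)_x = 0 on I (in Fourier coefficients: ∂_t û(k,t) + ik Σ_{n∈ℤ} S(−k,k−n,n) û(k−n,t) û(n,t) = 0) and u(·,0) = v(·,0), then u = v on I. -/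
open scoped BigOperators
open Filter

/-- The homogeneous Sobolev norm of order `s` of a Fourier coefficient sequence. -/
noncomputable def hnorm (s : ℝ) (u : ℤ → ℂ) : ℝ :=
  (∑' k : ℤ, |(k : ℝ)| ^ (2 * s) * ‖u k‖ ^ 2) ^ ((1 : ℝ) / 2)

/-- Membership in the homogeneous Sobolev space `Ḣ^s(𝕋)`. -/
def InHs (s : ℝ) (u : ℤ → ℂ) : Prop :=
  u 0 = 0 ∧ (∀ k : ℤ, u (-k) = starRingEnd ℂ (u k)) ∧
    Summable fun k : ℤ => |(k : ℝ)| ^ (2 * s) * ‖u k‖ ^ 2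

/-- The Fourier coefficients of the bilinear form `a(u,v)` determined by the kernel `S`. -/
noncomputable def aHat (S : ℤ → ℤ → ℤ → ℂ) (u v : ℤ → ℂ) (k : ℤ) : ℂ :=
  ∑' n : ℤ, S (-k) (k - n) n * u (k - n) * v n

/-- Continuity of `t ↦ u(·,t)` on `I` with values in `Ḣ^s`. -/
def HsContOn (s : ℝ) (u : ℝ → ℤ → ℂ) (I : Set ℝ) : Prop :=
  ∀ t₀ ∈ I, Tendsto (fun t => hnorm s fun k => u t k - u t₀ k) (nhdsWithin t₀ I) (nhds 0)

/-- `u` is a solution of `u_t + a(u,u)_x = 0` on the time interval `I`,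
belonging to `C(I; Ḣ^s) ∩ C¹(I; Ḣ^{s-1})`. -/
def IsSolution (S : ℤ → ℤ → ℤ → ℂ) (s : ℝ) (I : Set ℝ) (u : ℝ → ℤ → ℂ) : Prop :=
  (∀ t ∈ I, InHs s (u t)) ∧ HsContOn s u I ∧
    (∀ t ∈ I, ∀ k : ℤ, HasDerivAt (fun τ => u τ k)
      (-(Complex.I * (k : ℂ) * aHat S (u t) (u t) k)) t) ∧
    (∀ t ∈ I, InHs (s - 1) fun k => -(Complex.I * (k : ℂ) * aHat S (u t) (u t) k)) ∧
    HsContOn (s - 1) (fun t k => -(Complex.I * (k : ℂ) * aHat S (u t) (u t) k)) I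

/-!
The difference `w = u - v` of two solutions satisfies `w_t + a(u + v, w)_x = 0`. Pair this equation
with `w` in `L²`. The symmetries of `S` make the double frequency sum invariant under exchanging
`k` and `-n`, and averaging replaces the derivative falling on `w` by one falling on `p = u + v`.
Together with the bound on `S` this gives `|d/dt ‖w‖²| ≤ C (∑ |k|^(μ+1) |p̂(k)|) ‖w‖²`. By
Cauchy–Schwarz the sum is at most a constant times `‖p‖_s` because `s - (μ + 1) > 1/2`, so it is
bounded locally in time, and Grönwall's inequality forces `w = 0`.
-/

open scoped lp ENNReal

/-! ### Calculus in Banach spaces -/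

section Calculus

variable {E : Type*} [NormedAddCommGroup E] [NormedSpace ℝ E]

theorem hasDerivAt_of_forall_hasDerivAt_clm_comp [CompleteSpace E] {ι : Type*} {F : ι → Type*}
    [∀ i, NormedAddCommGroup (F i)] [∀ i, NormedSpace ℝ (F i)] [∀ i, CompleteSpace (F i)]
    {L : ∀ i, E →L[ℝ] F i} (hL : ∀ ⦃x y : E⦄, (∀ i, L i x = L i y) → x = y)
    {U : Set ℝ} (hU : IsOpen U) {x g : ℝ → E} (hg : ContinuousOn g U)
    (hx : ∀ i, ∀ t ∈ U, HasDerivAt (fun τ => L i (x τ)) (L i (g t)) t) {t : ℝ} (ht : t ∈ U) :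
    HasDerivAt x (g t) t := by
  obtain ⟨ε, hε, hball⟩ := Metric.isOpen_iff.1 hU t ht
  have hseg : ∀ τ ∈ Metric.ball t ε, Set.uIcc t τ ⊆ U := fun τ hτ =>
    ((convex_ball t ε).ordConnected.uIcc_subset (Metric.mem_ball_self hε) hτ).trans hball
  have hint : ∀ τ ∈ Metric.ball t ε, IntervalIntegrable g MeasureTheory.volume t τ := fun τ hτ =>
    (hg.mono (hseg τ hτ)).intervalIntegrable
  have hFTC : ∀ τ ∈ Metric.ball t ε, x τ = x t + ∫ σ in t..τ, g σ := by
    intro τ hτ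
    refine hL fun i => ?_
    have hLi := intervalIntegral.integral_eq_sub_of_hasDerivAt
      (fun σ hσ => hx i σ (hseg τ hτ hσ))
      ((L i).continuous.comp_continuousOn (hg.mono (hseg τ hτ))).intervalIntegrable
    rw [map_add, ← (L i).intervalIntegral_comp_comm (hint τ hτ), hLi, add_sub_cancel]
  have hderiv : HasDerivAt (fun τ => x t + ∫ σ in t..τ, g σ) (g t) t :=
    (intervalIntegral.integral_hasDerivAt_right (hint t (Metric.mem_ball_self hε))
      (hg.stronglyMeasurableAtFilter hU t ht) (hg.continuousAt (hU.mem_nhds ht))).const_add (x t)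
  exact hderiv.congr_of_eventuallyEq (eventually_of_mem (Metric.ball_mem_nhds t hε) hFTC)

variable {f f' : ℝ → E} {B : ℝ → ℝ} {I : Set ℝ} {t₀ : ℝ}

theorem eq_zero_of_norm_deriv_le_mul_norm_of_le (hI : I.OrdConnected) (hB : ContinuousOn B I)
    (hf : ∀ t ∈ I, HasDerivAt f (f' t) t) (hbound : ∀ t ∈ I, ‖f' t‖ ≤ B t * ‖f t‖)
    (ht₀ : t₀ ∈ I) (h₀ : f t₀ = 0) {t : ℝ} (ht : t ∈ I) (hle : t₀ ≤ t) : f t = 0 := by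
  have hsub : Set.Icc t₀ t ⊆ I := hI.out ht₀ ht
  obtain ⟨K, hK⟩ := isCompact_Icc.exists_bound_of_continuousOn (hB.mono hsub)
  refine eq_zero_of_abs_deriv_le_mul_abs_self_of_eq_zero_right (K := K)
    (fun τ hτ => (hf τ (hsub hτ)).continuousAt.continuousWithinAt)
    (fun τ hτ => (hf τ (hsub (Set.Ico_subset_Icc_self hτ))).hasDerivWithinAt) h₀
    (fun τ hτ => ?_) t ⟨hle, le_rfl⟩
  have hτ' := Set.Ico_subset_Icc_self hτ
  exact (hbound τ (hsub hτ')).trans <| by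
    gcongr
    exact (Real.le_norm_self _).trans (hK τ hτ')

theorem eq_zero_of_norm_deriv_le_mul_norm (hI : I.OrdConnected) (hB : ContinuousOn B I)
    (hf : ∀ t ∈ I, HasDerivAt f (f' t) t) (hbound : ∀ t ∈ I, ‖f' t‖ ≤ B t * ‖f t‖)
    (ht₀ : t₀ ∈ I) (h₀ : f t₀ = 0) {t : ℝ} (ht : t ∈ I) : f t = 0 := by
  rcases le_total t₀ t with hle | hle
  · exact eq_zero_of_norm_deriv_le_mul_norm_of_le hI hB hf hbound ht₀ h₀ ht hle
  · have hreflect := eq_zero_of_norm_deriv_le_mul_norm_of_le (I := Neg.neg ⁻¹' I)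
      (f := fun τ => f (-τ)) (f' := fun τ => -f' (-τ)) (B := fun τ => B (-τ))
      (t₀ := -t₀) (t := -t) ⟨fun _ hx _ hy _ hz => hI.out hy hx ⟨neg_le_neg hz.2, neg_le_neg hz.1⟩⟩
      (hB.comp continuous_neg.continuousOn fun _ hτ => hτ)
      (fun τ hτ => by
        simpa [Function.comp_def] using (hf (-τ) hτ).scomp τ (hasDerivAt_neg τ))
      (fun τ hτ => by simpa using hbound (-τ) hτ) (by simpa using ht₀) (by simpa using h₀)
      (by simpa using ht) (neg_le_neg hle)
    simpa using hreflect

end Calculus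

/-! ### Young's inequality -/

theorem summable_and_tsum_mul_norm_mul_norm_le {G E F : Type*} [AddGroup G]
    [NormedAddCommGroup E] [NormedAddCommGroup F] {p q : ℝ≥0∞}
    (hpq : p.toReal.HolderConjugate q.toReal) {P : G → ℝ} (hP₀ : ∀ d, 0 ≤ P d) (hP : Summable P)
    (x : ℓ^p(G, E)) (y : ℓ^q(G, F)) :
    (Summable fun k : G × G => P (k.1 - k.2) * ‖x k.1‖ * ‖y k.2‖) ∧
      ∑' k : G × G, P (k.1 - k.2) * ‖x k.1‖ * ‖y k.2‖ ≤ (∑' d, P d) * ‖x‖ * ‖y‖ := by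
  let diag : G × G ≃ G × G :=
    ⟨fun k => (k.1 + k.2, k.2), fun k => (k.1 - k.2, k.2), fun k => by simp, fun k => by simp⟩
  have hshift : ∀ d, HasSum (fun n => ‖x (d + n)‖ ^ p.toReal) (‖x‖ ^ p.toReal) := fun d =>
    (Equiv.addLeft d).hasSum_iff (f := fun k => ‖x k‖ ^ p.toReal) |>.2 (lp.hasSum_norm hpq.pos x)
  have hHolder : ∀ d, ∃ c, 0 ≤ c ∧ c ≤ ‖x‖ * ‖y‖ ∧ HasSum (fun n => ‖x (d + n)‖ * ‖y n‖) c :=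
    fun d => Real.inner_le_Lp_mul_Lq_hasSum_of_nonneg hpq (lp.norm_nonneg' x) (lp.norm_nonneg' y)
      (fun _ => norm_nonneg _) (fun _ => norm_nonneg _) (hshift d) (lp.hasSum_norm hpq.symm.pos y)
  choose c hc₀ hc hsum using hHolder
  have hPc : ∀ d, P d * c d ≤ P d * (‖x‖ * ‖y‖) := fun d => by gcongr; exacts [hP₀ d, hc d]
  have hPc_summable : Summable fun d => P d * c d :=
    (hP.mul_right _).of_nonneg_of_le (fun d => mul_nonneg (hP₀ d) (hc₀ d)) hPc
  have hrow : ∀ d, HasSum (fun n => P d * (‖x (d + n)‖ * ‖y n‖)) (P d * c d) :=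
    fun d => (hsum d).mul_left (P d)
  have hsummable : Summable fun k : G × G => P k.1 * (‖x (k.1 + k.2)‖ * ‖y k.2‖) :=
    (summable_prod_of_nonneg fun k => mul_nonneg (hP₀ k.1) (by positivity)).2
      ⟨fun d => (hrow d).summable, by simpa only [(hrow _).tsum_eq] using hPc_summable⟩
  have htotal : HasSum (fun k : G × G => P (k.1 - k.2) * ‖x k.1‖ * ‖y k.2‖) (∑' d, P d * c d) := by
    rw [← diag.hasSum_iff, (hsummable.hasSum.prod_fiberwise hrow).tsum_eq]
    simpa [Function.comp_def, diag, mul_assoc] using hsummable.hasSum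
  refine ⟨htotal.summable, ?_⟩
  rw [htotal.tsum_eq, mul_assoc, ← tsum_mul_right]
  exact hPc_summable.tsum_le_tsum hPc (hP.mul_right _)

/-! ### Sobolev spaces on the Fourier side -/

/-- The Fourier coefficients of `|D|^r f`. It identifies `Ḣ^s` isometrically with a subspace of
`ℓ²(ℤ, ℂ)`, so that the Hilbert space structure of `ℓ²` becomes available. For `r = 0` it is the
identity, including at frequency zero because `0 ^ 0 = 1`. -/
noncomputable def fracDeriv (r : ℝ) (f : ℤ → ℂ) : ℤ → ℂ := fun k => ((|(k : ℝ)| ^ r : ℝ) : ℂ) * f k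

section Sobolev

variable {r s : ℝ} {f g : ℤ → ℂ}

theorem norm_fracDeriv (r : ℝ) (f : ℤ → ℂ) (k : ℤ) :
    ‖fracDeriv r f k‖ = |(k : ℝ)| ^ r * ‖f k‖ := by
  rw [fracDeriv, norm_mul, Complex.norm_real, Real.norm_of_nonneg (by positivity)]

theorem norm_fracDeriv_sq (r : ℝ) (f : ℤ → ℂ) (k : ℤ) :
    ‖fracDeriv r f k‖ ^ 2 = |(k : ℝ)| ^ (2 * r) * ‖f k‖ ^ 2 := by
  rw [norm_fracDeriv, mul_pow, mul_comm 2 r, Real.rpow_mul (abs_nonneg _), Real.rpow_two]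

theorem fracDeriv_zero (f : ℤ → ℂ) : fracDeriv 0 f = f := by
  ext k
  simp [fracDeriv]

theorem fracDeriv_add (r : ℝ) (f g : ℤ → ℂ) :
    fracDeriv r (f + g) = fracDeriv r f + fracDeriv r g := by
  ext k
  exact mul_add _ _ _

theorem fracDeriv_sub (r : ℝ) (f g : ℤ → ℂ) :
    fracDeriv r (f - g) = fracDeriv r f - fracDeriv r g := by
  ext k
  exact mul_sub _ _ _

theorem norm_fracDeriv_le (hf : f 0 = 0) (hrs : r ≤ s) (k : ℤ) :
    ‖fracDeriv r f k‖ ≤ ‖fracDeriv s f k‖ := by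
  rcases eq_or_ne k 0 with rfl | hk
  · simp [fracDeriv, hf]
  · have : (1 : ℝ) ≤ |(k : ℝ)| := by exact_mod_cast Int.one_le_abs hk
    rw [norm_fracDeriv, norm_fracDeriv]
    gcongr

theorem memℓp_fracDeriv_iff :
    Memℓp (fracDeriv r f) 2 ↔ Summable fun k : ℤ => |(k : ℝ)| ^ (2 * r) * ‖f k‖ ^ 2 := by
  rw [memℓp_gen_iff (by norm_num)]
  simp [norm_fracDeriv_sq]

theorem norm_eq_hnorm {x : ℓ²(ℤ, ℂ)} (hx : ⇑x = fracDeriv r f) : ‖x‖ = hnorm r f := by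
  rw [lp.norm_eq_tsum_rpow (by norm_num)]
  simp [hnorm, hx, norm_fracDeriv_sq]

namespace InHs

theorem memℓp_fracDeriv (hf : InHs s f) (hrs : r ≤ s) : Memℓp (fracDeriv r f) 2 :=
  (memℓp_fracDeriv_iff.2 hf.2.2).mono' (norm_fracDeriv_le hf.1 hrs)

theorem mono (hf : InHs s f) (hrs : r ≤ s) : InHs r f :=
  ⟨hf.1, hf.2.1, memℓp_fracDeriv_iff.1 (hf.memℓp_fracDeriv hrs)⟩

theorem add (hf : InHs s f) (hg : InHs s g) : InHs s (f + g) :=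
  ⟨by simp [hf.1, hg.1], fun k => by simp [hf.2.1, hg.2.1], memℓp_fracDeriv_iff.1 <|
    fracDeriv_add s f g ▸ (hf.memℓp_fracDeriv le_rfl).add (hg.memℓp_fracDeriv le_rfl)⟩

theorem sub (hf : InHs s f) (hg : InHs s g) : InHs s (f - g) :=
  ⟨by simp [hf.1, hg.1], fun k => by simp [hf.2.1, hg.2.1], memℓp_fracDeriv_iff.1 <|
    fracDeriv_sub s f g ▸ (hf.memℓp_fracDeriv le_rfl).sub (hg.memℓp_fracDeriv le_rfl)⟩

theorem hnorm_le (hf : InHs s f) (hrs : r ≤ s) : hnorm r f ≤ hnorm s f := by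
  let x : ℓ²(ℤ, ℂ) := ⟨_, hf.memℓp_fracDeriv hrs⟩
  let y : ℓ²(ℤ, ℂ) := ⟨_, hf.memℓp_fracDeriv le_rfl⟩
  rw [← norm_eq_hnorm (x := x) rfl, ← norm_eq_hnorm (x := y) rfl]
  exact lp.norm_mono two_ne_zero (norm_fracDeriv_le hf.1 hrs)

end InHs

theorem HsContOn.exists_continuousOn_lp {u : ℝ → ℤ → ℂ} {I : Set ℝ} (hc : HsContOn s u I)
    (hu : ∀ t ∈ I, InHs s (u t)) (hrs : r ≤ s) :
    ∃ U : ℝ → ℓ²(ℤ, ℂ), ContinuousOn U I ∧ ∀ t ∈ I, ⇑(U t) = fracDeriv r (u t) := by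
  have hex : ∀ t, ∃ x : ℓ²(ℤ, ℂ), t ∈ I → ⇑x = fracDeriv r (u t) := fun t => by
    by_cases ht : t ∈ I
    · exact ⟨⟨_, (hu t ht).memℓp_fracDeriv hrs⟩, fun _ => rfl⟩
    · exact ⟨0, fun h => absurd h ht⟩
  choose U hU using hex
  refine ⟨U, fun t₀ ht₀ => ?_, hU⟩
  rw [ContinuousWithinAt, tendsto_iff_norm_sub_tendsto_zero]
  refine squeeze_zero' (Eventually.of_forall fun t => norm_nonneg _) ?_ (hc t₀ ht₀)
  filter_upwards [self_mem_nhdsWithin] with t ht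
  have hdiff : ⇑(U t - U t₀) = fracDeriv r (u t - u t₀) := by
    rw [lp.coeFn_sub, hU t ht, hU t₀ ht₀, fracDeriv_sub]
  rw [norm_eq_hnorm hdiff]
  exact ((hu t ht).sub (hu t₀ ht₀)).hnorm_le hrs

theorem exists_tsum_norm_fracDeriv_le (hrs : r + 1 / 2 < s) :
    ∃ M : ℝ, ∀ (f : ℤ → ℂ) (x : ℓ²(ℤ, ℂ)), f 0 = 0 → ⇑x = fracDeriv s f →
      (Summable fun k => ‖fracDeriv r f k‖) ∧ ∑' k, ‖fracDeriv r f k‖ ≤ M * ‖x‖ := by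
  have hweight : Memℓp (fracDeriv (r - s) 1) 2 := by
    refine memℓp_fracDeriv_iff.2 ?_
    simpa [mul_sub] using Real.summable_abs_int_rpow (b := 2 * (s - r)) (by linarith)
  let W : ℓ²(ℤ, ℂ) := ⟨_, hweight⟩
  refine ⟨‖W‖, fun f x hf hx => ?_⟩
  have hfactor : ∀ k, ‖fracDeriv r f k‖ = ‖W k‖ * ‖x k‖ := fun k => by
    rcases eq_or_ne k 0 with rfl | hk
    · simp [hx, fracDeriv, hf]
    · have hpos : (0 : ℝ) < |(k : ℝ)| := by positivity
      simp only [W, hx, norm_fracDeriv, Pi.one_apply, norm_one, mul_one, ← mul_assoc,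
        ← Real.rpow_add hpos, sub_add_cancel]
  simp only [hfactor]
  exact lp.tsum_mul_le_mul_norm (by norm_num [Real.holderConjugate_iff]) W x

end Sobolev

/-! ### The bilinear form -/

/-- The Fourier coefficients of `-a(f,g)_x`. -/
noncomputable def fluxHat (S : ℤ → ℤ → ℤ → ℂ) (f g : ℤ → ℂ) : ℤ → ℂ :=
  fun k => -(Complex.I * (k : ℂ) * aHat S f g k)

section Bilinear

variable {S : ℤ → ℤ → ℤ → ℂ} {f g : ℤ → ℂ}

theorem summable_aHat {k : ℤ} {B : ℝ} (hS : ∀ m n, ‖S (-k) m n‖ ≤ B) (hf : Memℓp f 2)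
    (hg : Memℓp g 2) : Summable fun n : ℤ => S (-k) (k - n) n * f (k - n) * g n := by
  have hsq : ∀ {h : ℤ → ℂ}, Memℓp h 2 → Summable fun n => ‖h n‖ ^ (2 : ℝ) := fun hh => by
    simpa using hh.summable (by norm_num)
  have hfg : Summable fun n => ‖f (k - n)‖ * ‖g n‖ :=
    Real.summable_mul_of_Lp_Lq_of_nonneg .two_two (fun _ => norm_nonneg _) (fun _ => norm_nonneg _)
      ((Equiv.subLeft k).summable_iff.2 (hsq hf)) (hsq hg)
  refine .of_norm_bounded (hfg.mul_left B) fun n => ?_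
  rw [norm_mul, norm_mul, mul_assoc]
  gcongr
  exact hS _ _

theorem aHat_comm (hSsym : ∀ k m n, S k m n = S k n m) (f g : ℤ → ℂ) (k : ℤ) :
    aHat S f g k = aHat S g f k := by
  rw [aHat, ← (Equiv.subLeft k).tsum_eq]
  refine tsum_congr fun n => ?_
  simp only [Equiv.subLeft_apply, sub_sub_cancel]
  rw [hSsym]
  ring

theorem aHat_self_sub_aHat_self (hSsym : ∀ k m n, S k m n = S k n m) {k : ℤ} {B : ℝ}
    (hS : ∀ m n, ‖S (-k) m n‖ ≤ B) (hf : Memℓp f 2) (hg : Memℓp g 2) :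
    aHat S f f k - aHat S g g k = aHat S (f + g) (f - g) k := by
  have hsum : ∀ {f g : ℤ → ℂ}, Memℓp f 2 → Memℓp g 2 →
      HasSum (fun n => S (-k) (k - n) n * f (k - n) * g n) (aHat S f g k) :=
    fun hf hg => (summable_aHat hS hf hg).hasSum
  have hexpand : aHat S (f + g) (f - g) k
      = aHat S f f k - aHat S f g k + aHat S g f k - aHat S g g k := by
    refine Eq.trans (tsum_congr fun n => ?_)
      ((((hsum hf hf).sub (hsum hf hg)).add (hsum hg hf)).sub (hsum hg hg)).tsum_eq
    simp only [Pi.add_apply, Pi.sub_apply]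
    ring
  rw [hexpand, aHat_comm hSsym f g]
  ring

theorem fluxHat_self_sub_fluxHat_self {C μ : ℝ} (hSsym : ∀ k m n, S k m n = S k n m)
    (hS : ∀ k m n : ℤ, ‖S k m n‖ ≤ C * |(k : ℝ)| ^ μ) (hf : Memℓp f 2) (hg : Memℓp g 2) :
    fluxHat S f f - fluxHat S g g = fluxHat S (f + g) (f - g) := by
  ext k
  simp only [Pi.sub_apply, fluxHat, ← aHat_self_sub_aHat_self hSsym (hS (-k)) hf hg]
  ring

theorem IsSolution.exists_hasDerivAt_lp {s : ℝ} {I : Set ℝ} {u : ℝ → ℤ → ℂ}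
    (hu : IsSolution S s I u) (hs : 1 ≤ s) (hI : IsOpen I) :
    ∃ U G : ℝ → ℓ²(ℤ, ℂ), ∀ t ∈ I,
      ⇑(U t) = u t ∧ ⇑(G t) = fluxHat S (u t) (u t) ∧ HasDerivAt U (G t) t := by
  obtain ⟨hmem, hcont, hderiv, hflux_mem, hflux_cont⟩ := hu
  obtain ⟨U, -, hU⟩ := hcont.exists_continuousOn_lp hmem (zero_le_one.trans hs)
  obtain ⟨G, hGcont, hG⟩ := hflux_cont.exists_continuousOn_lp hflux_mem (sub_nonneg.2 hs)
  simp only [fracDeriv_zero] at hU hG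
  refine ⟨U, G, fun t ht => ⟨hU t ht, hG t ht, ?_⟩⟩
  refine hasDerivAt_of_forall_hasDerivAt_clm_comp
    (L := fun k => (lp.evalCLM ℂ (fun _ : ℤ => ℂ) 2 k).restrictScalars ℝ)
    (fun x y h => lp.ext (funext h)) hI hGcont (fun k τ hτ => ?_) ht
  change HasDerivAt (fun σ => U σ k) (G τ k) τ
  rw [congrFun (hG τ hτ) k]
  refine (hderiv τ hτ k).congr_of_eventuallyEq ?_
  filter_upwards [hI.mem_nhds hτ] with σ hσ
  rw [hU σ hσ]

end Bilinear

/-! ### The energy estimate -/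

/-- The terms of the absolutely convergent expansion of `i ⟨-a(p,w)_x, w⟩` over pairs of
frequencies `(k, n)`. -/
noncomputable def energyTerm (S : ℤ → ℤ → ℤ → ℂ) (p w : ℤ → ℂ) (q : ℤ × ℤ) : ℂ :=
  (q.1 : ℂ) * S (-q.1) (q.1 - q.2) q.2 * p (q.1 - q.2) * starRingEnd ℂ (w q.1) * w q.2

section Energy

variable {S : ℤ → ℤ → ℤ → ℂ} {C μ : ℝ} {p w : ℤ → ℂ}

theorem norm_energyTerm_le (hS : ∀ k m n : ℤ, ‖S k m n‖ ≤ C * |(m : ℝ)| ^ μ) (q : ℤ × ℤ) :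
    ‖energyTerm S p w q‖ ≤
      C * (‖fracDeriv μ p (q.1 - q.2)‖ * ‖fracDeriv 1 w q.1‖ * ‖w q.2‖) := by
  simp only [energyTerm, norm_mul, RCLike.norm_conj, Complex.norm_intCast, norm_fracDeriv,
    Real.rpow_one]
  calc _ ≤ |(q.1 : ℝ)| * (C * |((q.1 - q.2 : ℤ) : ℝ)| ^ μ) * ‖p (q.1 - q.2)‖ * ‖w q.1‖
        * ‖w q.2‖ := by gcongr; exact hS _ _ _
    _ = _ := by ring

theorem summable_energyTerm (hS : ∀ k m n : ℤ, ‖S k m n‖ ≤ C * |(m : ℝ)| ^ μ)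
    (hp : Summable fun k => ‖fracDeriv μ p k‖) (hw : Memℓp w 2) (hw' : Memℓp (fracDeriv 1 w) 2) :
    Summable (energyTerm S p w) :=
  .of_norm_bounded ((summable_and_tsum_mul_norm_mul_norm_le
    (by norm_num [Real.holderConjugate_iff]) (fun _ => norm_nonneg _) hp
    (⟨_, hw'⟩ : ℓ²(ℤ, ℂ)) (⟨_, hw⟩ : ℓ²(ℤ, ℂ))).1.mul_left C) (norm_energyTerm_le hS)

-- Exchanging `k` and `-n` turns the unbounded factor `k` into `-n`, so symmetrization leaves the
-- factor `k - n`, which is a derivative on `p` rather than on `w`.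
theorem energyTerm_add_energyTerm_neg_swap (hSsym : ∀ k m n, S k m n = S k n m)
    (hScyc : ∀ k m n, S k m n = S m n k) (hw : ∀ k, w (-k) = starRingEnd ℂ (w k)) (q : ℤ × ℤ) :
    energyTerm S p w q + energyTerm S p w (-q.swap) =
      ((q.1 - q.2 : ℤ) : ℂ) * S (-q.1) (q.1 - q.2) q.2 * p (q.1 - q.2) *
        starRingEnd ℂ (w q.1) * w q.2 := by
  simp only [energyTerm, Prod.fst_neg, Prod.snd_neg, Prod.fst_swap, Prod.snd_swap, hw,
    Complex.conj_conj, neg_neg, neg_sub_neg]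
  rw [hSsym q.2, hScyc q.2]
  push_cast
  ring

theorem norm_energyTerm_add_energyTerm_neg_swap_le (hSsym : ∀ k m n, S k m n = S k n m)
    (hScyc : ∀ k m n, S k m n = S m n k) (hS : ∀ k m n : ℤ, ‖S k m n‖ ≤ C * |(m : ℝ)| ^ μ)
    (hw : ∀ k, w (-k) = starRingEnd ℂ (w k)) (q : ℤ × ℤ) :
    ‖energyTerm S p w q + energyTerm S p w (-q.swap)‖ ≤
      C * (‖fracDeriv (μ + 1) p (q.1 - q.2)‖ * ‖w q.1‖ * ‖w q.2‖) := by
  have hC : 0 ≤ C := by simpa using (norm_nonneg _).trans (hS 1 1 1)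
  rw [energyTerm_add_energyTerm_neg_swap hSsym hScyc hw]
  rcases eq_or_ne (q.1 - q.2) 0 with hq | hq
  · rw [hq, Int.cast_zero, zero_mul, zero_mul, zero_mul, zero_mul, norm_zero]
    positivity
  have hq' : |((q.1 - q.2 : ℤ) : ℝ)| ≠ 0 := by positivity
  simp only [norm_mul, RCLike.norm_conj, Complex.norm_intCast, norm_fracDeriv,
    Real.rpow_add_one hq']
  calc _ ≤ |((q.1 - q.2 : ℤ) : ℝ)| * (C * |((q.1 - q.2 : ℤ) : ℝ)| ^ μ) * ‖p (q.1 - q.2)‖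
        * ‖w q.1‖ * ‖w q.2‖ := by gcongr; exact hS _ _ _
    _ = _ := by ring

theorem norm_tsum_energyTerm_le (hSsym : ∀ k m n, S k m n = S k n m)
    (hScyc : ∀ k m n, S k m n = S m n k) (hS : ∀ k m n : ℤ, ‖S k m n‖ ≤ C * |(m : ℝ)| ^ μ)
    (hp : Summable fun k => ‖fracDeriv (μ + 1) p k‖) {x : ℓ²(ℤ, ℂ)}
    (hx : ∀ k, x (-k) = starRingEnd ℂ (x k)) (hE : Summable (energyTerm S p x)) :
    2 * ‖∑' q, energyTerm S p x q‖ ≤ C * (∑' k, ‖fracDeriv (μ + 1) p k‖) * ‖x‖ ^ 2 := by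
  have hC : 0 ≤ C := by simpa using (norm_nonneg _).trans (hS 1 1 1)
  have hswap : HasSum (fun q : ℤ × ℤ => energyTerm S p x (-q.swap)) (∑' q, energyTerm S p x q) :=
    ((Equiv.prodComm ℤ ℤ).trans (Equiv.neg _)).hasSum_iff.2 hE.hasSum
  obtain ⟨hY, hY_le⟩ := summable_and_tsum_mul_norm_mul_norm_le
    (by norm_num [Real.holderConjugate_iff]) (fun _ => norm_nonneg _) hp x x
  calc 2 * ‖∑' q, energyTerm S p x q‖
      = ‖∑' q, (energyTerm S p x q + energyTerm S p x (-q.swap))‖ := by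
        rw [(hE.hasSum.add hswap).tsum_eq, ← two_mul, norm_mul, Complex.norm_two]
    _ ≤ C * ∑' q : ℤ × ℤ, ‖fracDeriv (μ + 1) p (q.1 - q.2)‖ * ‖x q.1‖ * ‖x q.2‖ :=
        tsum_of_norm_bounded (hY.hasSum.mul_left C)
          (norm_energyTerm_add_energyTerm_neg_swap_le hSsym hScyc hS hx)
    _ ≤ C * ((∑' k, ‖fracDeriv (μ + 1) p k‖) * ‖x‖ * ‖x‖) := by gcongr
    _ = C * (∑' k, ‖fracDeriv (μ + 1) p k‖) * ‖x‖ ^ 2 := by ring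

theorem inner_fluxHat_eq_im_tsum_energyTerm {x g : ℓ²(ℤ, ℂ)} (hg : ⇑g = fluxHat S p x)
    (hE : Summable (energyTerm S p x)) : inner ℝ x g = (∑' q, energyTerm S p x q).im := by
  have hrow : ∀ k, inner ℝ (x k) (g k) = (∑' n, energyTerm S p x (k, n)).im := fun k => by
    have hfactor : ∑' n, energyTerm S p x (k, n)
        = (k : ℂ) * starRingEnd ℂ (x k) * aHat S p x k := by
      rw [aHat, ← tsum_mul_left]
      exact tsum_congr fun n => by simp only [energyTerm]; ring
    have hrotate : -(Complex.I * (k : ℂ) * aHat S p x k) * starRingEnd ℂ (x k)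
        = -(Complex.I * ((k : ℂ) * starRingEnd ℂ (x k) * aHat S p x k)) := by ring
    rw [hfactor, hg, Complex.inner, fluxHat, hrotate, Complex.neg_re, Complex.I_mul_re, neg_neg]
  rw [lp.inner_eq_tsum, hE.tsum_prod, Complex.im_tsum hE.prod]
  exact tsum_congr hrow

theorem abs_inner_fluxHat_le (hSsym : ∀ k m n, S k m n = S k n m)
    (hScyc : ∀ k m n, S k m n = S m n k) (hS : ∀ k m n : ℤ, ‖S k m n‖ ≤ C * |(m : ℝ)| ^ μ)
    (hp₀ : p 0 = 0) (hp : Summable fun k => ‖fracDeriv (μ + 1) p k‖) {x g : ℓ²(ℤ, ℂ)}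
    (hx : InHs 1 x) (hg : ⇑g = fluxHat S p x) :
    |2 * inner ℝ x g| ≤ C * (∑' k, ‖fracDeriv (μ + 1) p k‖) * ‖x‖ ^ 2 := by
  have hpμ : Summable fun k => ‖fracDeriv μ p k‖ :=
    hp.of_nonneg_of_le (fun _ => norm_nonneg _) (norm_fracDeriv_le hp₀ (by linarith))
  have hE : Summable (energyTerm S p x) :=
    summable_energyTerm hS hpμ (lp.memℓp x) (hx.memℓp_fracDeriv le_rfl)
  rw [inner_fluxHat_eq_im_tsum_energyTerm hg hE, abs_mul, abs_two]
  grw [Complex.abs_im_le_norm]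
  exact norm_tsum_energyTerm_le hSsym hScyc hS hp hx.2.1 hE

theorem abs_inner_sub_le_of_eq_fluxHat_self (hSsym : ∀ k m n, S k m n = S k n m)
    (hScyc : ∀ k m n, S k m n = S m n k) (hS : ∀ k m n : ℤ, ‖S k m n‖ ≤ C * |(k : ℝ)| ^ μ)
    {x y g h : ℓ²(ℤ, ℂ)} (hx : InHs 1 x) (hy : InHs 1 y) (hg : ⇑g = fluxHat S x x)
    (hh : ⇑h = fluxHat S y y) (hxy : Summable fun k => ‖fracDeriv (μ + 1) (x + y) k‖) :
    |2 * inner ℝ (x - y) (g - h)| ≤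
      C * (∑' k, ‖fracDeriv (μ + 1) (x + y) k‖) * ‖x - y‖ ^ 2 := by
  have hflux : ⇑(g - h) = fluxHat S (x + y) ⇑(x - y) := by
    rw [lp.coeFn_sub, lp.coeFn_sub, hg, hh,
      fluxHat_self_sub_fluxHat_self hSsym hS (lp.memℓp x) (lp.memℓp y)]
  exact abs_inner_fluxHat_le hSsym hScyc (fun k m n => hScyc k m n ▸ hS m n k)
    (by simp [hx.1, hy.1]) hxy (lp.coeFn_sub x y ▸ hx.sub hy) hflux

end Energy

/-! ### Uniqueness -/

section Uniqueness

variable {μ C s : ℝ} {S : ℤ → ℤ → ℤ → ℂ} {I : Set ℝ} {u v : ℝ → ℤ → ℂ}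

theorem IsSolution.exists_hasDerivAt_sq_norm_sub (hSsym : ∀ k m n : ℤ, S k m n = S k n m)
    (hScyc : ∀ k m n : ℤ, S k m n = S m n k) (hS : ∀ k m n : ℤ, ‖S k m n‖ ≤ C * |(k : ℝ)| ^ μ)
    (hμs : μ + 3 / 2 < s) (hs : 1 ≤ s) (hI : IsOpen I) (hu : IsSolution S s I u)
    (hv : IsSolution S s I v) :
    ∃ (W : ℝ → ℓ²(ℤ, ℂ)) (e B : ℝ → ℝ), ContinuousOn B I ∧ ∀ t ∈ I, ⇑(W t) = u t - v t ∧
      HasDerivAt (fun τ => ‖W τ‖ ^ 2) (e t) t ∧ |e t| ≤ B t * ‖W t‖ ^ 2 := by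
  obtain ⟨U, G, hU⟩ := hu.exists_hasDerivAt_lp hs hI
  obtain ⟨V, H, hV⟩ := hv.exists_hasDerivAt_lp hs hI
  obtain ⟨X, hX, hXu⟩ := hu.2.1.exists_continuousOn_lp hu.1 le_rfl
  obtain ⟨Y, hY, hYv⟩ := hv.2.1.exists_continuousOn_lp hv.1 le_rfl
  obtain ⟨M, hM⟩ := exists_tsum_norm_fracDeriv_le (r := μ + 1) (s := s) (by linarith)
  have hC : 0 ≤ C := by simpa using (norm_nonneg _).trans (hS 1 1 1)
  refine ⟨fun t => U t - V t, fun t => 2 * inner ℝ (U t - V t) (G t - H t),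
    fun t => C * (M * ‖X t + Y t‖),
    continuousOn_const.mul (continuousOn_const.mul (hX.add hY).norm), fun t ht => ?_⟩
  obtain ⟨hUt, hGt, hU'⟩ := hU t ht
  obtain ⟨hVt, hHt, hV'⟩ := hV t ht
  refine ⟨by rw [lp.coeFn_sub, hUt, hVt], (hU'.sub hV').norm_sq, ?_⟩
  obtain ⟨hsum, hsum_le⟩ := hM (u t + v t) (X t + Y t) (by simp [(hu.1 t ht).1, (hv.1 t ht).1])
    (by rw [lp.coeFn_add, hXu t ht, hYv t ht, fracDeriv_add])
  refine (abs_inner_sub_le_of_eq_fluxHat_self hSsym hScyc hS (hUt ▸ (hu.1 t ht).mono hs)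
    (hVt ▸ (hv.1 t ht).mono hs) (hUt ▸ hGt) (hVt ▸ hHt) (hUt ▸ hVt ▸ hsum)).trans ?_
  rw [hUt, hVt]
  exact mul_le_mul_of_nonneg_right (mul_le_mul_of_nonneg_left hsum_le hC) (sq_nonneg _)

theorem uniqueness_of_solutions_general (hSsym : ∀ k m n : ℤ, S k m n = S k n m)
    (hScyc : ∀ k m n : ℤ, S k m n = S m n k) (hS : ∀ k m n : ℤ, ‖S k m n‖ ≤ C * |(k : ℝ)| ^ μ)
    (hμs : μ + 3 / 2 < s) (hs : 1 ≤ s) (hIo : IsOpen I) (hIc : I.OrdConnected)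
    (hu : IsSolution S s I u) (hv : IsSolution S s I v) {t₀ : ℝ} (ht₀ : t₀ ∈ I)
    (h₀ : u t₀ = v t₀) : ∀ t ∈ I, u t = v t := by
  intro t ht
  obtain ⟨W, e, B, hB, hW⟩ :=
    hu.exists_hasDerivAt_sq_norm_sub hSsym hScyc hS hμs hs hIo hv
  have hinit : W t₀ = 0 := lp.ext ((hW t₀ ht₀).1.trans (sub_eq_zero.2 h₀))
  have henergy : ‖W t‖ ^ 2 = 0 :=
    eq_zero_of_norm_deriv_le_mul_norm hIc hB (fun τ hτ => (hW τ hτ).2.1)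
      (fun τ hτ => by simpa using (hW τ hτ).2.2) ht₀ (by simp [hinit]) ht
  have hzero : W t = 0 := norm_eq_zero.1 (sq_eq_zero_iff.1 henergy)
  rw [← sub_eq_zero, ← (hW t ht).1, hzero, lp.coeFn_zero]

end Uniqueness

/-- Uniqueness of `C(I;Ḣ^s) ∩ C¹(I;Ḣ^{s−1})` solutions with the same initial data. -/
theorem uniqueness_of_solutions
    (μ : ℝ) (hμ : 0 ≤ μ) (S : ℤ → ℤ → ℤ → ℂ)
    (hS0 : ∀ k m n : ℤ, k * m * n = 0 → S k m n = 0)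
    (hSsym : ∀ k m n : ℤ, S k m n = S k n m)
    (hScyc : ∀ k m n : ℤ, S k m n = S m n k)
    (hSreal : ∀ k m n : ℤ, S k m n = starRingEnd ℂ (S (-k) (-m) (-n)))
    (C : ℝ) (hC : 0 < C)
    (hSbound : ∀ k m n : ℤ, ‖S k m n‖ ≤
      C * min (|(k : ℝ)| ^ μ) (min (|(m : ℝ)| ^ μ) (|(n : ℝ)| ^ μ)))
    (s : ℝ) (hs : μ + 3 / 2 < s)
    (a b : ℝ) (hab : (0 : ℝ) ∈ Set.Ioo a b)
    (u v : ℝ → ℤ → ℂ)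
    (husol : IsSolution S s (Set.Ioo a b) u)
    (hvsol : IsSolution S s (Set.Ioo a b) v)
    (hinit : u 0 = v 0) :
    ∀ t ∈ Set.Ioo a b, u t = v t :=
  uniqueness_of_solutions_general hSsym hScyc
    (fun k m n => (hSbound k m n).trans (by gcongr; exact min_le_left _ _)) hs (by linarith)
    isOpen_Ioo Set.ordConnected_Ioo husol hvsol hab hinit
end

section
/- For every s > 0 and λ ≥ 0 there exists a constant C_{s,λ} > 0 such that for all nonzero real numbers k, m, n with k + m + n = 0, one has |k|k|^{2s} + m|m|^{2s} + n|n|^{2s}| / min{|k|^λ, |m|^λ, |n|^λ} ≤ C_{s,λ} (|k|^s |m|^s |n|^{1−λ} + |n|^s |k|^s |m|^{1−λ} + |m|^s |n|^s |k|^{1−λ}). -/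
/-!
The inequality holds for vectors of a real normed space, with `‖x‖ ^ (2 * s) • x` in place of
`x * |x| ^ (2 * s)`. On the ball of radius `R` the map `x ↦ ‖x‖ ^ p • x` is Lipschitz with constant
`(p + 1) * R ^ p`. Let `k` be the shortest of the three vectors. Since `n - (-m) = -k`, the
`m` and `n` terms nearly cancel, and the whole sum is at most
`(2 * s + 2) * max ‖m‖ ‖n‖ ^ (2 * s) * ‖k‖`. The lengths of `m` and `n` differ by a factor of at
most `2`, so `max ‖m‖ ‖n‖ ^ (2 * s)` is comparable to `‖m‖ ^ s * ‖n‖ ^ s`. Dividing by `‖k‖ ^ λ`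
gives a single one of the three terms on the right.
-/

section RealPowers

variable {c p s x y : ℝ}

theorem add_one_mul_rpow_mul_le (hp : 0 ≤ p) (hx : 0 ≤ x) (hy : 0 ≤ y) :
    (p + 1) * (y ^ p * x) ≤ p * y ^ (p + 1) + x ^ (p + 1) := by
  have hp' : 0 < p + 1 := by positivity
  have amgm : y ^ p * x ≤ p / (p + 1) * y ^ (p + 1) + 1 / (p + 1) * x ^ (p + 1) := by
    have weighted := Real.geom_mean_le_arith_mean2_weighted (div_nonneg hp hp'.le)
      (one_div_nonneg.2 hp'.le) (Real.rpow_nonneg hy (p + 1)) (Real.rpow_nonneg hx (p + 1))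
      (by rw [← add_div, div_self hp'.ne'])
    rwa [← Real.rpow_mul hy, ← Real.rpow_mul hx, mul_div_cancel₀ _ hp'.ne',
      mul_one_div_cancel hp'.ne', Real.rpow_one] at weighted
  calc (p + 1) * (y ^ p * x)
      ≤ (p + 1) * (p / (p + 1) * y ^ (p + 1) + 1 / (p + 1) * x ^ (p + 1)) := by gcongr
    _ = p * y ^ (p + 1) + x ^ (p + 1) := by field_simp

theorem rpow_sub_rpow_mul_le (hp : 0 ≤ p) (hx : 0 ≤ x) (hy : 0 ≤ y) :
    (y ^ p - x ^ p) * x ≤ p * y ^ p * (y - x) := by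
  have young := add_one_mul_rpow_mul_le hp hx hy
  rw [Real.rpow_add_one' hy (by positivity), Real.rpow_add_one' hx (by positivity)] at young
  linarith

theorem rpow_two_mul_le_of_le_mul (hs : 0 ≤ s) (hc : 0 ≤ c) (hx : 0 ≤ x) (hy : 0 ≤ y)
    (hyx : y ≤ c * x) : y ^ (2 * s) ≤ c ^ s * (x ^ s * y ^ s) := by
  calc y ^ (2 * s) = y ^ s * y ^ s := by rw [two_mul, Real.rpow_add_of_nonneg hy hs hs]
    _ ≤ (c * x) ^ s * y ^ s := by gcongr
    _ = c ^ s * (x ^ s * y ^ s) := by rw [Real.mul_rpow hc hx, mul_assoc]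

end RealPowers

section NormedSpace

variable {E : Type*}

section Seminormed

variable [SeminormedAddCommGroup E] [NormedSpace ℝ E] {p s : ℝ} {x y k m n : E}

theorem norm_norm_rpow_smul_sub_le (hp : 0 ≤ p) (hxy : ‖x‖ ≤ ‖y‖) :
    ‖‖y‖ ^ p • y - ‖x‖ ^ p • x‖ ≤ (p + 1) * ‖y‖ ^ p * ‖y - x‖ := by
  have split : ‖y‖ ^ p • y - ‖x‖ ^ p • x = ‖y‖ ^ p • (y - x) + (‖y‖ ^ p - ‖x‖ ^ p) • x := by
    module
  have norm_rpow_le : ‖x‖ ^ p ≤ ‖y‖ ^ p := by gcongr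
  calc ‖‖y‖ ^ p • y - ‖x‖ ^ p • x‖
      ≤ ‖‖y‖ ^ p • (y - x)‖ + ‖(‖y‖ ^ p - ‖x‖ ^ p) • x‖ := split ▸ norm_add_le _ _
    _ = ‖y‖ ^ p * ‖y - x‖ + (‖y‖ ^ p - ‖x‖ ^ p) * ‖x‖ := by
        rw [norm_smul_of_nonneg (by positivity), norm_smul_of_nonneg (sub_nonneg.2 norm_rpow_le)]
    _ ≤ ‖y‖ ^ p * ‖y - x‖ + p * ‖y‖ ^ p * (‖y‖ - ‖x‖) := by
        grw [rpow_sub_rpow_mul_le hp (norm_nonneg x) (norm_nonneg y)]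
    _ ≤ ‖y‖ ^ p * ‖y - x‖ + p * ‖y‖ ^ p * ‖y - x‖ := by
        gcongr
        exact norm_sub_norm_le y x
    _ = (p + 1) * ‖y‖ ^ p * ‖y - x‖ := by ring

theorem norm_sum_norm_rpow_smul_le (hp : 0 ≤ p) (hsum : k + m + n = 0) (hkn : ‖k‖ ≤ ‖n‖)
    (hmn : ‖m‖ ≤ ‖n‖) :
    ‖‖k‖ ^ p • k + ‖m‖ ^ p • m + ‖n‖ ^ p • n‖ ≤ (p + 2) * ‖n‖ ^ p * ‖k‖ := by
  have lipschitz : ‖‖n‖ ^ p • n + ‖m‖ ^ p • m‖ ≤ (p + 1) * ‖n‖ ^ p * ‖k‖ := by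
    have hnm : n + m = -k := by rw [eq_neg_iff_add_eq_zero, ← hsum]; abel
    simpa only [norm_neg, smul_neg, sub_neg_eq_add, hnm] using
      norm_norm_rpow_smul_sub_le (x := -m) hp ((norm_neg m).trans_le hmn)
  calc ‖‖k‖ ^ p • k + ‖m‖ ^ p • m + ‖n‖ ^ p • n‖
      ≤ ‖‖k‖ ^ p • k‖ + ‖‖n‖ ^ p • n + ‖m‖ ^ p • m‖ := by
        rw [add_assoc, add_comm (‖m‖ ^ p • m)]
        exact norm_add_le _ _
    _ ≤ ‖n‖ ^ p * ‖k‖ + (p + 1) * ‖n‖ ^ p * ‖k‖ := by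
        rw [norm_smul_of_nonneg (by positivity)]
        gcongr
    _ = (p + 2) * ‖n‖ ^ p * ‖k‖ := by ring

theorem norm_sum_norm_rpow_two_mul_smul_le (hs : 0 ≤ s) (hsum : k + m + n = 0)
    (hkm : ‖k‖ ≤ ‖m‖) (hkn : ‖k‖ ≤ ‖n‖) :
    ‖‖k‖ ^ (2 * s) • k + ‖m‖ ^ (2 * s) • m + ‖n‖ ^ (2 * s) • n‖ ≤
      (2 * s + 2) * 2 ^ s * (‖m‖ ^ s * ‖n‖ ^ s * ‖k‖) := by
  wlog hmn : ‖m‖ ≤ ‖n‖ generalizing m n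
  · rw [add_right_comm, mul_comm (‖m‖ ^ s)]
    exact this (by rwa [add_right_comm]) hkn hkm (le_of_not_ge hmn)
  have norm_n_le : ‖n‖ ≤ 2 * ‖m‖ := by
    have triangle : ‖n‖ ≤ ‖k‖ + ‖m‖ := by
      rw [← norm_neg n, ← eq_neg_of_add_eq_zero_left hsum]
      exact norm_add_le k m
    linarith
  calc ‖‖k‖ ^ (2 * s) • k + ‖m‖ ^ (2 * s) • m + ‖n‖ ^ (2 * s) • n‖
      ≤ (2 * s + 2) * ‖n‖ ^ (2 * s) * ‖k‖ :=
        norm_sum_norm_rpow_smul_le (by positivity) hsum hkn hmn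
    _ ≤ (2 * s + 2) * (2 ^ s * (‖m‖ ^ s * ‖n‖ ^ s)) * ‖k‖ := by
        gcongr
        exact rpow_two_mul_le_of_le_mul hs zero_le_two (norm_nonneg m) (norm_nonneg n) norm_n_le
    _ = (2 * s + 2) * 2 ^ s * (‖m‖ ^ s * ‖n‖ ^ s * ‖k‖) := by ring

end Seminormed

variable [NormedAddCommGroup E] [NormedSpace ℝ E] {s lam : ℝ} {k m n : E}

theorem norm_sum_norm_rpow_smul_div_norm_rpow_le (hs : 0 ≤ s) (hk : k ≠ 0)
    (hsum : k + m + n = 0) (hkm : ‖k‖ ≤ ‖m‖) (hkn : ‖k‖ ≤ ‖n‖) :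
    ‖‖k‖ ^ (2 * s) • k + ‖m‖ ^ (2 * s) • m + ‖n‖ ^ (2 * s) • n‖ / ‖k‖ ^ lam ≤
      (2 * s + 2) * 2 ^ s * (‖m‖ ^ s * ‖n‖ ^ s * ‖k‖ ^ (1 - lam)) := by
  rw [Real.rpow_sub (norm_pos_iff.2 hk), Real.rpow_one, ← mul_div_assoc, ← mul_div_assoc]
  gcongr
  exact norm_sum_norm_rpow_two_mul_smul_le hs hsum hkm hkn

theorem weighted_symmetric_inequality_general (hs : 0 ≤ s) (hlam : 0 ≤ lam) (hk : k ≠ 0)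
    (hm : m ≠ 0) (hn : n ≠ 0) (hsum : k + m + n = 0) :
    ‖‖k‖ ^ (2 * s) • k + ‖m‖ ^ (2 * s) • m + ‖n‖ ^ (2 * s) • n‖ /
        min (‖k‖ ^ lam) (min (‖m‖ ^ lam) (‖n‖ ^ lam)) ≤
      (2 * s + 2) * 2 ^ s * (‖k‖ ^ s * ‖m‖ ^ s * ‖n‖ ^ (1 - lam) +
        ‖n‖ ^ s * ‖k‖ ^ s * ‖m‖ ^ (1 - lam) + ‖m‖ ^ s * ‖n‖ ^ s * ‖k‖ ^ (1 - lam)) := by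
  have rpow_mono {x y : E} (hxy : ‖x‖ ≤ ‖y‖) : ‖x‖ ^ lam ≤ ‖y‖ ^ lam := by gcongr
  have k_term := norm_sum_norm_rpow_smul_div_norm_rpow_le (lam := lam) hs hk hsum
  have m_term := norm_sum_norm_rpow_smul_div_norm_rpow_le (k := m) (m := n) (n := k) (lam := lam)
    hs hm (by rw [← hsum]; abel)
  have n_term := norm_sum_norm_rpow_smul_div_norm_rpow_le (k := n) (m := k) (n := m) (lam := lam)
    hs hn (by rw [← hsum]; abel)
  rw [← add_rotate] at m_term
  rw [add_rotate] at n_term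
  have term_nonneg (x y z : E) :
      0 ≤ (2 * s + 2) * 2 ^ s * (‖x‖ ^ s * ‖y‖ ^ s * ‖z‖ ^ (1 - lam)) := by positivity
  rw [mul_add, mul_add]
  obtain ⟨hkm, hkn⟩ | ⟨hmn, hmk⟩ | ⟨hnk, hnm⟩ : (‖k‖ ≤ ‖m‖ ∧ ‖k‖ ≤ ‖n‖) ∨
      (‖m‖ ≤ ‖n‖ ∧ ‖m‖ ≤ ‖k‖) ∨ (‖n‖ ≤ ‖k‖ ∧ ‖n‖ ≤ ‖m‖) := by grind
  · rw [min_eq_left (le_min (rpow_mono hkm) (rpow_mono hkn))]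
    linarith [k_term hkm hkn, term_nonneg n k m, term_nonneg k m n]
  · rw [min_eq_left (rpow_mono hmn), min_eq_right (rpow_mono hmk)]
    linarith [m_term hmn hmk, term_nonneg m n k, term_nonneg k m n]
  · rw [min_eq_right (rpow_mono hnm), min_eq_right (rpow_mono hnk)]
    linarith [n_term hnk hnm, term_nonneg m n k, term_nonneg n k m]

end NormedSpace

/-- The weighted inequality of Proposition 4.1: for `s > 0`, `λ ≥ 0` there is a
constant `C_{s,λ}` such that for all nonzero reals `k,m,n` with `k+m+n = 0`,
`|k|k|^{2s} + m|m|^{2s} + n|n|^{2s}| / min{|k|^λ,|m|^λ,|n|^λ}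
   ≤ C_{s,λ}(|k|^s|m|^s|n|^{1−λ} + |n|^s|k|^s|m|^{1−λ} + |m|^s|n|^s|k|^{1−λ})`. -/
theorem weighted_symmetric_inequality (s lam : ℝ) (hs : 0 < s) (hlam : 0 ≤ lam) :
    ∃ Cslam : ℝ, 0 < Cslam ∧
      ∀ k m n : ℝ, k ≠ 0 → m ≠ 0 → n ≠ 0 → k + m + n = 0 →
        |k * |k| ^ (2 * s) + m * |m| ^ (2 * s) + n * |n| ^ (2 * s)| /
            min (|k| ^ lam) (min (|m| ^ lam) (|n| ^ lam)) ≤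
          Cslam * (|k| ^ s * |m| ^ s * |n| ^ (1 - lam) +
            |n| ^ s * |k| ^ s * |m| ^ (1 - lam) +
            |m| ^ s * |n| ^ s * |k| ^ (1 - lam)) := by
  refine ⟨(2 * s + 2) * 2 ^ s, by positivity, fun k m n hk hm hn hsum ↦ ?_⟩
  simpa only [Real.norm_eq_abs, smul_eq_mul, mul_comm (|_| ^ (2 * s))] using
    weighted_symmetric_inequality_general hs.le hlam hk hm hn hsum
end

section
/- For every s > 0 there exists a constant C_s > 0 such that for all real numbers k, m, n with k + m + n = 0, one has |k|k|^{2s} + m|m|^{2s} + n|n|^{2s}| ≤ C_s (|k|^s |m|^s |n| + |n|^s |k|^s |m| + |m|^s |n|^s |k|). -/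
/-!
Among three reals two have the same sign, say `k` and `m`; with `a = |k|` and `b = |m|` one then has
`|n| = a + b`, and by oddness of `x ↦ x * |x| ^ (2 * s)` the left-hand side is the superadditivity
defect `(a + b) ^ (2 * s + 1) - a ^ (2 * s + 1) - b ^ (2 * s + 1)`. If `b ≤ a`, convexity bounds
this by `(2 * s + 1) * b * (a + b) ^ (2 * s)`, and `a + b ≤ 2 * a` lets one factor `(a + b) ^ s` be
exchanged for `2 ^ s * a ^ s`.
-/

theorem add_rpow_sub_rpow_le {a b p : ℝ} (ha : 0 ≤ a) (hb : 0 ≤ b) (hp : 1 ≤ p) :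
    (a + b) ^ p - a ^ p ≤ p * b * (a + b) ^ (p - 1) := by
  rcases hb.eq_or_lt with rfl | hb
  · simp
  have hderiv : HasDerivAt (fun x : ℝ => x ^ p) (p * (a + b) ^ (p - 1)) (a + b) :=
    Real.hasDerivAt_rpow_const (Or.inr hp)
  have hslope := (convexOn_rpow hp).slope_le_of_hasDerivAt (Set.mem_Ici.2 ha)
    (Set.mem_Ici.2 (by positivity)) (lt_add_of_pos_right a hb) hderiv
  rw [slope_def_field, add_sub_cancel_left, div_le_iff₀ hb] at hslope
  linarith

theorem add_rpow_sub_rpow_sub_rpow_le {s a b : ℝ} (hs : 0 ≤ s) (ha : 0 ≤ a) (hb : 0 ≤ b) :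
    (a + b) ^ (2 * s + 1) - a ^ (2 * s + 1) - b ^ (2 * s + 1) ≤
      (2 * s + 1) * 2 ^ s * ((a + b) ^ s * (a ^ s * b + b ^ s * a)) := by
  wlog hba : b ≤ a generalizing a b
  · have := this hb ha (le_of_not_ge hba)
    rw [add_comm b a] at this
    linarith
  have hdouble : (a + b) ^ s ≤ 2 ^ s * a ^ s := by
    rw [← Real.mul_rpow zero_le_two ha]
    gcongr
    linarith
  calc (a + b) ^ (2 * s + 1) - a ^ (2 * s + 1) - b ^ (2 * s + 1)
      ≤ (a + b) ^ (2 * s + 1) - a ^ (2 * s + 1) := sub_le_self _ (by positivity)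
    _ ≤ (2 * s + 1) * b * (a + b) ^ (2 * s + 1 - 1) :=
        add_rpow_sub_rpow_le ha hb (by linarith)
    _ = (2 * s + 1) * b * ((a + b) ^ s * (a + b) ^ s) := by
        rw [add_sub_cancel_right, two_mul, Real.rpow_add_of_nonneg (by positivity) hs hs]
    _ ≤ (2 * s + 1) * b * ((a + b) ^ s * (2 ^ s * a ^ s)) := by gcongr
    _ = (2 * s + 1) * 2 ^ s * ((a + b) ^ s * (a ^ s * b)) := by ring
    _ ≤ (2 * s + 1) * 2 ^ s * ((a + b) ^ s * (a ^ s * b + b ^ s * a)) := by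
        gcongr
        exact le_add_of_nonneg_right (by positivity)

theorem abs_mul_abs_rpow_add_sub_eq_of_mul_nonneg {r a b : ℝ} (hr : 0 ≤ r) (hab : 0 ≤ a * b) :
    |a * |a| ^ r + b * |b| ^ r - (a + b) * |a + b| ^ r| =
      (|a| + |b|) ^ (r + 1) - |a| ^ (r + 1) - |b| ^ (r + 1) := by
  wlog hsign : 0 ≤ a ∧ 0 ≤ b generalizing a b
  · obtain ⟨ha, hb⟩ := (mul_nonneg_iff.1 hab).resolve_left hsign
    have := this (a := -a) (b := -b) (by linarith)
      ⟨neg_nonneg.2 ha, neg_nonneg.2 hb⟩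
    rw [← neg_add, abs_neg, abs_neg, abs_neg] at this
    rw [← this, ← abs_neg]
    congr 1
    ring
  obtain ⟨ha, hb⟩ := hsign
  have mul_rpow_self {x : ℝ} (hx : 0 ≤ x) : x * x ^ r = x ^ (r + 1) := by
    rw [Real.rpow_add_one' hx (by positivity), mul_comm]
  rw [abs_of_nonneg ha, abs_of_nonneg hb, abs_of_nonneg (add_nonneg ha hb), mul_rpow_self ha,
    mul_rpow_self hb, mul_rpow_self (add_nonneg ha hb), abs_sub_comm, ← sub_sub, abs_of_nonneg]
  have := Real.add_rpow_le_rpow_add ha hb (le_add_of_nonneg_left hr)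
  linarith

theorem abs_sum_mul_abs_rpow_le_of_mul_nonneg {s a b c : ℝ} (hs : 0 ≤ s) (h : a + b + c = 0)
    (hab : 0 ≤ a * b) :
    |a * |a| ^ (2 * s) + b * |b| ^ (2 * s) + c * |c| ^ (2 * s)| ≤
      (2 * s + 1) * 2 ^ s * (|a| ^ s * |b| ^ s * |c| + |c| ^ s * |a| ^ s * |b| +
        |b| ^ s * |c| ^ s * |a|) := by
  obtain rfl : c = -(a + b) := by linarith
  have habs : |a + b| = |a| + |b| := abs_add_eq_add_abs_iff a b |>.2 (mul_nonneg_iff.1 hab)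
  rw [abs_neg, neg_mul, ← sub_eq_add_neg,
    abs_mul_abs_rpow_add_sub_eq_of_mul_nonneg (by positivity) hab, habs]
  refine (add_rpow_sub_rpow_sub_rpow_le hs (abs_nonneg a) (abs_nonneg b)).trans ?_
  gcongr
  have : 0 ≤ |a| ^ s * |b| ^ s * (|a| + |b|) := by positivity
  linarith

/-- The inequality (5.2): for `s > 0` there is a constant `C_s` such that for all
reals `k,m,n` with `k+m+n = 0`,
`|k|k|^{2s} + m|m|^{2s} + n|n|^{2s}| ≤ C_s(|k|^s|m|^s|n| + |n|^s|k|^s|m| + |m|^s|n|^s|k|)`. -/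
theorem symmetric_inequality (s : ℝ) (hs : 0 < s) :
    ∃ Cs : ℝ, 0 < Cs ∧
      ∀ k m n : ℝ, k + m + n = 0 →
        |k * |k| ^ (2 * s) + m * |m| ^ (2 * s) + n * |n| ^ (2 * s)| ≤
          Cs * (|k| ^ s * |m| ^ s * |n| + |n| ^ s * |k| ^ s * |m| +
            |m| ^ s * |n| ^ s * |k|) := by
  refine ⟨(2 * s + 1) * 2 ^ s, by positivity, fun k m n hsum => ?_⟩
  rcases mul_nonneg_of_three k m n with hkm | hmn | hnk
  · exact abs_sum_mul_abs_rpow_le_of_mul_nonneg hs.le hsum hkm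
  · convert abs_sum_mul_abs_rpow_le_of_mul_nonneg hs.le (by linarith : m + n + k = 0) hmn
      using 2 <;> ring
  · convert abs_sum_mul_abs_rpow_le_of_mul_nonneg hs.le (by linarith : n + k + m = 0) hnk
      using 2 <;> ring
end

section
/- For s > 0 and λ ≥ 0, define f_{s,λ} : (0,1] → ℝ by f_{s,λ}(x) = ((x+1)^{2s+1} − x^{2s+1} − 1) / ((x+1)^s (x^{s+λ} + x) + (x+1)^{1−λ} x^{s+λ}). Then f_{s,λ} is continuous on (0,1] and has a finite limit as x → 0⁺, namely: lim_{x→0⁺} f_{s,λ}(x) = 0 if 0 < s + λ < 1; lim_{x→0⁺} f_{s,λ}(x) = (2s+1)/3 if s + λ = 1; and lim_{x→0⁺} f_{s,λ}(x) = 2s+1 if s + λ > 1. Consequently f_{s,λ} is bounded on (0,1]. -/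
open Filter

open Set Topology

/-!
Put `p = 2 * s + 1`, `a = s`, `b = 1 - λ` and `q = s + λ`. Near `0⁺` the numerator
`(x + 1) ^ p - x ^ p - 1` is asymptotic to `p * x`, because `p > 1` makes `x ^ p` negligible.
Dividing the denominator by `x` leaves `((x + 1) ^ a + (x + 1) ^ b) * x ^ (q - 1) + (x + 1) ^ a`, so
the limit of the quotient depends only on whether `x ^ (q - 1)` tends to `∞`, `1` or `0`. Since the
limit is finite, the quotient extends continuously to the compact interval `[0, 1]`.
-/

theorem exists_norm_le_of_continuousOn_sdiff_singleton {X E : Type*} [TopologicalSpace X]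
    [T1Space X] [SeminormedAddCommGroup E] {K : Set X} (hK : IsCompact K) {f : X → E} {a : X}
    {l : E} (hf : ContinuousOn f (K \ {a})) (hl : Tendsto f (𝓝[K \ {a}] a) (𝓝 l)) :
    ∃ C, ∀ x ∈ K \ {a}, ‖f x‖ ≤ C := by
  classical
  have hcont : ContinuousOn (Function.update f a l) K :=
    continuousOn_update_iff.2 ⟨hf, fun _ => hl⟩
  obtain ⟨C, hC⟩ := hK.exists_bound_of_continuousOn hcont
  refine ⟨C, fun x hx => ?_⟩
  simpa only [Function.update_of_ne hx.2] using hC x hx.1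

theorem tendsto_add_one_rpow_nhdsGT_zero (r : ℝ) :
    Tendsto (fun x : ℝ => (x + 1) ^ r) (𝓝[>] 0) (𝓝 1) := by
  have h : ContinuousAt (fun x : ℝ => (x + 1) ^ r) 0 :=
    (continuousAt_id.add continuousAt_const).rpow_const (.inl (by norm_num))
  simpa using h.tendsto.mono_left nhdsWithin_le_nhds

theorem tendsto_add_one_rpow_sub_one_div_nhdsGT_zero (p : ℝ) :
    Tendsto (fun x : ℝ => ((x + 1) ^ p - 1) / x) (𝓝[>] 0) (𝓝 p) := by
  have h : HasDerivAt (fun x : ℝ => (x + 1) ^ p) p 0 := by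
    simpa using ((hasDerivAt_id (0 : ℝ)).add_const 1).rpow_const (p := p) (.inl (by norm_num))
  simpa [div_eq_inv_mul] using h.tendsto_slope_zero_right

/-- The defect of superadditivity of `t ↦ t ^ p` at the pair `(x, 1)`, the numerator of `f_{s,λ}`
when `p = 2 * s + 1`. -/
noncomputable def rpowDefect (p x : ℝ) : ℝ :=
  (x + 1) ^ p - x ^ p - 1

/-- The denominator of `f_{s,λ}`, with the exponents `s`, `1 - λ`, `s + λ` replaced by independent
parameters `a`, `b`, `q`. -/
noncomputable def rpowWeight (a b q x : ℝ) : ℝ :=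
  (x + 1) ^ a * (x ^ q + x) + (x + 1) ^ b * x ^ q

theorem rpowWeight_pos (a b q : ℝ) {x : ℝ} (hx : 0 < x) : 0 < rpowWeight a b q x := by
  unfold rpowWeight
  positivity

theorem rpowWeight_div_self (a b q : ℝ) {x : ℝ} (hx : 0 < x) :
    rpowWeight a b q x / x = ((x + 1) ^ a + (x + 1) ^ b) * x ^ (q - 1) + (x + 1) ^ a := by
  rw [rpowWeight, Real.rpow_sub_one hx.ne']
  field_simp
  ring

theorem continuousOn_rpowDefect_div_rpowWeight (p a b q : ℝ) :
    ContinuousOn (fun x => rpowDefect p x / rpowWeight a b q x) (Ioi 0) := by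
  have hpow (r : ℝ) : ContinuousOn (fun x : ℝ => x ^ r) (Ioi 0) :=
    continuousOn_id.rpow_const fun _ hx => .inl (ne_of_gt hx)
  have hshift (r : ℝ) : ContinuousOn (fun x : ℝ => (x + 1) ^ r) (Ioi 0) :=
    (continuousOn_id.add continuousOn_const).rpow_const fun _ hx =>
      .inl (add_pos hx one_pos).ne'
  have hnum : ContinuousOn (rpowDefect p) (Ioi 0) :=
    ((hshift p).sub (hpow p)).sub continuousOn_const
  have hden : ContinuousOn (rpowWeight a b q) (Ioi 0) :=
    ((hshift a).mul ((hpow q).add continuousOn_id)).add ((hshift b).mul (hpow q))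
  exact hnum.div hden fun _ hx => (rpowWeight_pos a b q hx).ne'

theorem tendsto_rpowDefect_div_nhdsGT_zero {p : ℝ} (hp : 1 < p) :
    Tendsto (fun x => rpowDefect p x / x) (𝓝[>] 0) (𝓝 p) := by
  have hpow : Tendsto (fun x : ℝ => x ^ (p - 1)) (𝓝[>] 0) (𝓝 0) :=
    tendsto_nhdsWithin_of_tendsto_nhds tendsto_id |>.rpow_const_nhds_zero (sub_pos.2 hp)
  have h := (tendsto_add_one_rpow_sub_one_div_nhdsGT_zero p).sub hpow
  rw [sub_zero] at h
  refine h.congr' ?_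
  filter_upwards [self_mem_nhdsWithin] with x (hx : 0 < x)
  rw [rpowDefect, Real.rpow_sub_one hx.ne']
  ring

theorem tendsto_rpowWeight_div_atTop_of_lt_one (a b : ℝ) {q : ℝ} (hq : q < 1) :
    Tendsto (fun x => rpowWeight a b q x / x) (𝓝[>] 0) atTop := by
  have hcoeff := (tendsto_add_one_rpow_nhdsGT_zero a).add (tendsto_add_one_rpow_nhdsGT_zero b)
  have hpow : Tendsto (fun x : ℝ => x ^ (q - 1)) (𝓝[>] 0) atTop :=
    tendsto_rpow_neg_nhdsGT_zero (sub_neg.2 hq)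
  refine ((hcoeff.pos_mul_atTop (by norm_num) hpow).atTop_add
    (tendsto_add_one_rpow_nhdsGT_zero a)).congr' ?_
  filter_upwards [self_mem_nhdsWithin] with x hx
  exact (rpowWeight_div_self a b q hx).symm

theorem tendsto_rpowWeight_div_of_tendsto_rpow (a b : ℝ) {q c : ℝ}
    (hc : Tendsto (fun x : ℝ => x ^ (q - 1)) (𝓝[>] 0) (𝓝 c)) :
    Tendsto (fun x => rpowWeight a b q x / x) (𝓝[>] 0) (𝓝 (2 * c + 1)) := by
  have hcoeff := (tendsto_add_one_rpow_nhdsGT_zero a).add (tendsto_add_one_rpow_nhdsGT_zero b)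
  rw [one_add_one_eq_two] at hcoeff
  refine ((hcoeff.mul hc).add (tendsto_add_one_rpow_nhdsGT_zero a)).congr' ?_
  filter_upwards [self_mem_nhdsWithin] with x hx
  exact (rpowWeight_div_self a b q hx).symm

theorem tendsto_rpowDefect_div_rpowWeight_nhdsGT_zero {p : ℝ} (hp : 1 < p) (a b q : ℝ) :
    Tendsto (fun x => rpowDefect p x / rpowWeight a b q x) (𝓝[>] 0)
      (𝓝 (if q < 1 then 0 else if q = 1 then p / 3 else p)) := by
  have hnum := tendsto_rpowDefect_div_nhdsGT_zero hp
  have hquot : (fun x => rpowDefect p x / x / (rpowWeight a b q x / x)) =ᶠ[𝓝[>] 0]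
      fun x => rpowDefect p x / rpowWeight a b q x := by
    filter_upwards [self_mem_nhdsWithin] with x hx
    exact div_div_div_cancel_right₀ (ne_of_gt hx) _ _
  refine Tendsto.congr' hquot ?_
  split_ifs with hlt heq
  · exact hnum.div_atTop (tendsto_rpowWeight_div_atTop_of_lt_one a b hlt)
  · have hpow : Tendsto (fun x : ℝ => x ^ (q - 1)) (𝓝[>] 0) (𝓝 1) := by
      simp [heq]
    have hden := tendsto_rpowWeight_div_of_tendsto_rpow a b hpow
    rw [show (2 : ℝ) * 1 + 1 = 3 by norm_num] at hden
    exact hnum.div hden three_ne_zero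
  · have hgt : 1 < q := lt_of_le_of_ne (not_lt.1 hlt) (Ne.symm heq)
    have hpow : Tendsto (fun x : ℝ => x ^ (q - 1)) (𝓝[>] 0) (𝓝 0) :=
      tendsto_nhdsWithin_of_tendsto_nhds tendsto_id |>.rpow_const_nhds_zero (sub_pos.2 hgt)
    have hden := tendsto_rpowWeight_div_of_tendsto_rpow a b hpow
    rw [mul_zero, zero_add] at hden
    simpa only [div_one] using! hnum.div hden one_ne_zero

theorem f_s_lam_properties_general {p : ℝ} (hp : 1 < p) {a b q : ℝ} {f : ℝ → ℝ}
    (hf : EqOn f (fun x => rpowDefect p x / rpowWeight a b q x) (Ioc 0 1)) :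
    ContinuousOn f (Ioc 0 1) ∧
    Tendsto f (𝓝[Ioc 0 1] 0) (𝓝 (if q < 1 then 0 else if q = 1 then p / 3 else p)) ∧
    ∃ B : ℝ, ∀ x ∈ Ioc (0 : ℝ) 1, |f x| ≤ B := by
  have hcont : ContinuousOn f (Ioc 0 1) :=
    ((continuousOn_rpowDefect_div_rpowWeight p a b q).mono Ioc_subset_Ioi_self).congr hf
  have hlim := ((tendsto_rpowDefect_div_rpowWeight_nhdsGT_zero hp a b q).mono_left
    (nhdsWithin_mono 0 Ioc_subset_Ioi_self)).congr' hf.symm.eventuallyEq_nhdsWithin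
  refine ⟨hcont, hlim, ?_⟩
  rw [← Icc_sdiff_left] at hcont hlim ⊢
  exact exists_norm_le_of_continuousOn_sdiff_singleton isCompact_Icc hcont hlim

/-- Properties of the function `f_{s,λ}` from the proof of Proposition 4.1:
it is continuous on `(0,1]`, has the stated finite limit as `x → 0⁺`, and is
consequently bounded on `(0,1]`. -/
theorem f_s_lam_properties (s lam : ℝ) (hs : 0 < s) (hlam : 0 ≤ lam)
    (f : ℝ → ℝ)
    (hf : ∀ x : ℝ, 0 < x → x ≤ 1 →
      f x = ((x + 1) ^ (2 * s + 1) - x ^ (2 * s + 1) - 1) /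
        ((x + 1) ^ s * (x ^ (s + lam) + x) + (x + 1) ^ (1 - lam) * x ^ (s + lam))) :
    ContinuousOn f (Set.Ioc 0 1) ∧
    Tendsto f (nhdsWithin 0 (Set.Ioc 0 1))
      (nhds (if s + lam < 1 then 0 else if s + lam = 1 then (2 * s + 1) / 3 else 2 * s + 1)) ∧
    ∃ B : ℝ, ∀ x ∈ Set.Ioc (0 : ℝ) 1, |f x| ≤ B :=
  f_s_lam_properties_general (by linarith) fun x hx => hf x hx.1 hx.2
end

section
/- Let ν ≥ 3/2 and let T : ℤ³ → ℂ satisfy T(k,m,n) = conj(T(−k,−m,−n)), T(k,m,n) = T(k,n,m), T(k,m,n) = T(m,n,k), T(k,m,n) = 0 whenever kmn = 0, and the bound |T(k,m,n)| ≤ C |kmn|^{1/2} min{|k|^{ν−3/2}, |m|^{ν−3/2}, |n|^{ν−3/2}}. Let s > ν + 1/2 and let I be an open time interval. Suppose φ̂ : ℤ × I → ℂ satisfies φ̂(0,t) = 0 and φ̂(−k,t) = conj(φ̂(k,t)), the Sobolev bound sup_{t∈I} Σ_k |k|^{2s}|φ̂(k,t)|² < ∞ with t ↦ φ̂(·,t)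 continuous into this norm, each φ̂(k,·) is differentiable, and the spectral evolution equation ∂_t φ̂(k,t) + i·sgn(k) Σ_{n∈ℤ} T(−k, k−n, n) φ̂(k−n,t) φ̂(n,t) = 0 holds for all k ∈ ℤ, t ∈ I. Then the Hamiltonian ℋ(t) = Σ_{m,n=1}^∞ [ T(−m−n, m, n) conj(φ̂(m+n,t)) φ̂(m,t) φ̂(n,t) + conj(T(−m−n, m, n)) conj(φ̂(m,t)) conj(φ̂(n,t)) φ̂(m+n,t) ] is constant on I. -/
open scoped BigOperators
open Filter

/-!
Extended to all wavenumbers, three times the Hamiltonian is the sum of `T k m n φ(k) φ(m) φ(n)` over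
the triads `k + m + n = 0`: of the three cyclic rotations of a triad of nonzero wavenumbers, exactly
one has last two entries of the same sign. By the cyclic symmetry of `T`, the time derivative of this
sum is three times the sum with `∂ₜφ` in the first slot, that is `3 ∑ₖ ∂ₜφ(-k) Q(k)`, where `Q(k)` is
the quadratic sum in the evolution equation. Since `∂ₜφ(k) = -i sgn(k) Q(k)`, the summand
`i sgn(k) Q(-k) Q(k)` is odd in `k`, so this derivative vanishes.

All rearrangements are justified by absolute convergence: `|k| ≤ 2|m||n|` on a triad, which gives
`|T k m n| ≤ 2C (|m||n|)^(ν/2 + 1/4)`, and against coefficients of size `|k|^(-s)` this is summable as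
soon as `s > ν/2 + 5/4`.
-/

theorem hasSum_add_comp_add_comp_comp {α M : Type*} [AddCommMonoid M] [TopologicalSpace M]
    [ContinuousAdd M] (r : α ≃ α) {f : α → M} {a : M} (hf : HasSum f a) :
    HasSum (fun x => f x + f (r x) + f (r (r x))) (3 • a) := by
  have hf₁ : HasSum (fun x => f (r x)) a := r.hasSum_iff.2 hf
  have hf₂ : HasSum (fun x => f (r (r x))) a := r.hasSum_iff.2 hf₁
  simpa only [succ_nsmul, zero_nsmul, zero_add] using (hf.add hf₁).add hf₂

section Triads

variable {G 𝕜 : Type*} [AddCommGroup G] [RCLike 𝕜] {T : G → G → G → 𝕜} {u v : G → 𝕜}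

/-- The summand of the trilinear form with kernel `T` at the triad `k + m + n = 0`, which is encoded
by the pair `(m, n)`. -/
def triad (T : G → G → G → 𝕜) (u v w : G → 𝕜) (p : G × G) : 𝕜 :=
  T (-(p.1 + p.2)) p.1 p.2 * u (-(p.1 + p.2)) * v p.1 * w p.2

/-- The quadratic nonlinearity with kernel `T` at the wavenumber `k`. -/
noncomputable def triadConv (T : G → G → G → 𝕜) (u : G → 𝕜) (k : G) : 𝕜 :=
  ∑' n, T (-k) (k - n) n * u (k - n) * u n

/-- The cyclic rotation `(k, m, n) ↦ (m, n, k)` of a triad `k + m + n = 0` encoded by `(m, n)`. -/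
@[simps]
def triadRotation (G : Type*) [AddCommGroup G] : G × G ≃ G × G where
  toFun p := (p.2, -(p.1 + p.2))
  invFun p := (-(p.1 + p.2), p.1)
  left_inv p := by ext <;> simp
  right_inv p := by ext <;> simp

theorem triad_triadRotation (hcyc : ∀ k m n, T k m n = T m n k) (u v w : G → 𝕜) (p : G × G) :
    triad T u v w (triadRotation G p) = triad T w u v p := by
  have h : -(p.2 + -(p.1 + p.2)) = p.1 := by abel
  simp only [triad, triadRotation_apply, h, hcyc (-(p.1 + p.2)) p.1 p.2]
  ring

theorem triad_eq_mul_triad_one (T : G → G → G → 𝕜) (u v w : G → 𝕜) (p : G × G) :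
    triad T u v w p = u (-(p.1 + p.2)) * triad T 1 v w p := by
  simp only [triad, Pi.one_apply]
  ring

theorem triadConv_eq_tsum_triad (T : G → G → G → 𝕜) (u : G → 𝕜) (k : G) :
    triadConv T u k = ∑' n, triad T 1 u u (k - n, n) := by
  simp [triadConv, triad]

theorem norm_triad_le {W : G × G → ℝ} {K : ℝ} (hW : ∀ p, ‖triad T 1 u u p‖ ≤ W p)
    (hv : ∀ p : G × G, ‖v (-(p.1 + p.2))‖ ≤ K) (p : G × G) : ‖triad T v u u p‖ ≤ K * W p := by
  rw [triad_eq_mul_triad_one, norm_mul]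
  exact mul_le_mul (hv p) (hW p) (norm_nonneg _) ((norm_nonneg _).trans (hv p))

theorem norm_triadConv_le {W : G × G → ℝ} (hW : ∀ p, ‖triad T 1 u u p‖ ≤ W p) (hsum : Summable W)
    (k : G) : ‖triadConv T u k‖ ≤ ∑' p, W p := by
  have hinj : Function.Injective fun n : G => (k - n, n) := fun _ _ h => congrArg Prod.snd h
  rw [triadConv_eq_tsum_triad]
  calc ‖∑' n, triad T 1 u u (k - n, n)‖
      ≤ ∑' n, W (k - n, n) :=
        tsum_of_norm_bounded (hsum.comp_injective hinj).hasSum fun n => hW (k - n, n)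
    _ ≤ ∑' p, W p := tsum_comp_le_tsum_of_inj hsum (fun p => (norm_nonneg _).trans (hW p)) hinj

theorem tsum_triad_eq_tsum_mul_triadConv (hsum : Summable (triad T v u u)) :
    ∑' p, triad T v u u p = ∑' k, v (-k) * triadConv T u k := by
  let e : G × G ≃ G × G :=
    { toFun := fun p => (p.1 - p.2, p.2)
      invFun := fun p => (p.1 + p.2, p.2)
      left_inv := fun p => by simp
      right_inv := fun p => by simp }
  rw [← e.tsum_eq]
  refine (Summable.tsum_prod (e.summable_iff.2 hsum)).trans (tsum_congr fun k => ?_)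
  rw [triadConv_eq_tsum_triad, ← tsum_mul_left]
  refine tsum_congr fun n => (triad_eq_mul_triad_one T v u u (k - n, n)).trans ?_
  simp only [sub_add_cancel]

theorem tsum_triad_eq_zero {σ : G → 𝕜} (hσ : σ.Odd) (hv : ∀ k, v k = σ k * triadConv T u k)
    (hsum : Summable (triad T v u u)) : ∑' p, triad T v u u p = 0 := by
  rw [tsum_triad_eq_tsum_mul_triadConv hsum, ← self_eq_neg]
  calc ∑' k, v (-k) * triadConv T u k
      = ∑' k, v (- -k) * triadConv T u (-k) := (tsum_comp_neg _).symm
    _ = ∑' k, -(v (-k) * triadConv T u k) := by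
        refine tsum_congr fun k => ?_
        rw [neg_neg, hv, hv, hσ k]
        ring
    _ = -∑' k, v (-k) * triadConv T u k := tsum_neg

variable {φ v : ℝ → G → 𝕜} {I : Set ℝ} {V : G × G → ℝ}

theorem hasDerivAt_triad {t : ℝ} {v : G → 𝕜} (hφ : ∀ k, HasDerivAt (fun τ => φ τ k) (v k) t)
    (p : G × G) :
    HasDerivAt (fun τ => triad T (φ τ) (φ τ) (φ τ) p)
      (triad T v (φ t) (φ t) p + triad T (φ t) v (φ t) p + triad T (φ t) (φ t) v p) t := by
  refine ((((hφ _).const_mul (T (-(p.1 + p.2)) p.1 p.2)).mul (hφ p.1)).mul (hφ p.2)).congr_deriv ?_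
  simp only [triad, Pi.mul_apply]
  ring

theorem hasDerivAt_tsum_triad (hcyc : ∀ k m n, T k m n = T m n k) (hI : IsOpen I)
    (hI' : IsPreconnected I) (hφ : ∀ t ∈ I, ∀ k, HasDerivAt (fun τ => φ τ k) (v t k) t)
    (hV : Summable V) (hbound : ∀ t ∈ I, ∀ p, ‖triad T (v t) (φ t) (φ t) p‖ ≤ V p) {t : ℝ}
    (ht : t ∈ I) (hsum : Summable (triad T (φ t) (φ t) (φ t))) :
    HasDerivAt (fun τ => ∑' p, triad T (φ τ) (φ τ) (φ τ) p)
      (3 * ∑' p, triad T (v t) (φ t) (φ t) p) t := by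
  set D : ℝ → G × G → 𝕜 := fun τ => triad T (v τ) (φ τ) (φ τ) with hD
  have hderiv : ∀ p, ∀ τ ∈ I, HasDerivAt (fun τ => triad T (φ τ) (φ τ) (φ τ) p)
      (D τ p + D τ (triadRotation G p) + D τ (triadRotation G (triadRotation G p))) τ :=
    fun p τ hτ => by
      simpa only [hD, triad_triadRotation hcyc] using hasDerivAt_triad (hφ τ hτ) p
  have hDsum : Summable (D t) := .of_norm_bounded hV (hbound t ht)
  refine (hasDerivAt_tsum_of_isPreconnected
    (hasSum_add_comp_add_comp_comp (triadRotation G) hV.hasSum).summable hI hI' hderiv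
    (fun p τ hτ => ?_) ht hsum ht).congr_deriv ?_
  · exact norm_add₃_le.trans (add_le_add_three (hbound τ hτ _) (hbound τ hτ _) (hbound τ hτ _))
  · rw [(hasSum_add_comp_add_comp_comp (triadRotation G) hDsum.hasSum).tsum_eq, nsmul_eq_mul,
      Nat.cast_ofNat]

theorem tsum_triad_eq_of_hasDerivAt (hcyc : ∀ k m n, T k m n = T m n k) (hI : IsOpen I)
    (hI' : IsPreconnected I) {σ : G → 𝕜} (hσ : σ.Odd)
    (hv : ∀ t ∈ I, ∀ k, v t k = σ k * triadConv T (φ t) k)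
    (hφ : ∀ t ∈ I, ∀ k, HasDerivAt (fun τ => φ τ k) (v t k) t)
    (hV : Summable V) (hbound : ∀ t ∈ I, ∀ p, ‖triad T (v t) (φ t) (φ t) p‖ ≤ V p)
    (hsum : ∀ t ∈ I, Summable (triad T (φ t) (φ t) (φ t))) {t t' : ℝ} (ht : t ∈ I) (ht' : t' ∈ I) :
    ∑' p, triad T (φ t) (φ t) (φ t) p = ∑' p, triad T (φ t') (φ t') (φ t') p := by
  have hderiv : ∀ τ ∈ I, HasDerivAt (fun τ => ∑' p, triad T (φ τ) (φ τ) (φ τ) p) 0 τ :=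
    fun τ hτ => by
      have hzero := tsum_triad_eq_zero hσ (hv τ hτ) (.of_norm_bounded hV (hbound τ hτ))
      simpa only [hzero, mul_zero] using
        hasDerivAt_tsum_triad hcyc hI hI' hφ hV hbound hτ (hsum τ hτ)
  exact hI.is_const_of_deriv_eq_zero hI'
    (fun τ hτ => (hderiv τ hτ).differentiableAt.differentiableWithinAt)
    (fun τ hτ => (hderiv τ hτ).deriv) ht ht'

end Triads

section Hamiltonian

/-- The Hamiltonian of the Fourier coefficients `u`; the pair `p` of natural numbers stands for the
positive wavenumbers `m = p.1 + 1` and `n = p.2 + 1`. -/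
noncomputable def hamiltonian (T : ℤ → ℤ → ℤ → ℂ) (u : ℤ → ℂ) : ℂ :=
  ∑' p : ℕ × ℕ,
    (T (-(((p.1 : ℤ) + 1) + ((p.2 : ℤ) + 1))) ((p.1 : ℤ) + 1) ((p.2 : ℤ) + 1) *
        starRingEnd ℂ (u (((p.1 : ℤ) + 1) + ((p.2 : ℤ) + 1))) *
        u ((p.1 : ℤ) + 1) * u ((p.2 : ℤ) + 1) +
      starRingEnd ℂ (T (-(((p.1 : ℤ) + 1) + ((p.2 : ℤ) + 1))) ((p.1 : ℤ) + 1) ((p.2 : ℤ) + 1)) *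
        starRingEnd ℂ (u ((p.1 : ℤ) + 1)) * starRingEnd ℂ (u ((p.2 : ℤ) + 1)) *
        u (((p.1 : ℤ) + 1) + ((p.2 : ℤ) + 1)))

/-- The set of pairs of nonzero integers of the same sign. -/
def sameSign : Set (ℤ × ℤ) := Set.Ioi 0 ×ˢ Set.Ioi 0 ∪ Set.Iio 0 ×ˢ Set.Iio 0

theorem mem_sameSign {p : ℤ × ℤ} : p ∈ sameSign ↔ 0 < p.1 ∧ 0 < p.2 ∨ p.1 < 0 ∧ p.2 < 0 :=
  Iff.rfl

theorem exactly_one_rotation_mem_sameSign {p : ℤ × ℤ} (hp : (p.1 + p.2) * p.1 * p.2 ≠ 0) :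
    let q := triadRotation ℤ p
    let r := triadRotation ℤ q
    p ∈ sameSign ∧ q ∉ sameSign ∧ r ∉ sameSign ∨ p ∉ sameSign ∧ q ∈ sameSign ∧ r ∉ sameSign ∨
      p ∉ sameSign ∧ q ∉ sameSign ∧ r ∈ sameSign := by
  obtain ⟨⟨hk, hm⟩, hn⟩ : (p.1 + p.2 ≠ 0 ∧ p.1 ≠ 0) ∧ p.2 ≠ 0 := by
    simpa only [mul_ne_zero_iff] using hp
  simp only [mem_sameSign, triadRotation_apply]
  omega

theorem tsum_eq_three_mul_tsum_indicator_sameSign {𝕜 : Type*} [RCLike 𝕜] {F : ℤ × ℤ → 𝕜}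
    (hF : Summable F) (hrot : ∀ p, F (triadRotation ℤ p) = F p)
    (hzero : ∀ p : ℤ × ℤ, (p.1 + p.2) * p.1 * p.2 = 0 → F p = 0) :
    ∑' p, F p = 3 * ∑' p, sameSign.indicator F p := by
  set S := sameSign.indicator F with hS
  have hdecomp : ∀ p, F p =
      S p + S (triadRotation ℤ p) + S (triadRotation ℤ (triadRotation ℤ p)) := fun p => by
    by_cases hp : (p.1 + p.2) * p.1 * p.2 = 0
    · have hSzero : ∀ q, F q = 0 → S q = 0 := fun q hq => Set.indicator_apply_eq_zero.2 fun _ => hq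
      simp only [hrot, hzero p hp, hSzero, add_zero]
    · rcases exactly_one_rotation_mem_sameSign hp with
        ⟨h₀, h₁, h₂⟩ | ⟨h₀, h₁, h₂⟩ | ⟨h₀, h₁, h₂⟩ <;>
      simp only [hS, h₀, h₁, h₂, Set.indicator_of_mem, Set.indicator_of_notMem, not_false_eq_true,
        hrot, add_zero, zero_add]
  rw [tsum_congr hdecomp, (hasSum_add_comp_add_comp_comp (triadRotation ℤ)
    (hF.indicator sameSign).hasSum).tsum_eq, nsmul_eq_mul, Nat.cast_ofNat]

theorem tsum_indicator_range {α β E : Type*} [AddCommMonoid E] [TopologicalSpace E] {g : α → β}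
    (hg : Function.Injective g) (f : β → E) :
    ∑' y, (Set.range g).indicator f y = ∑' x, f (g x) := by
  rw [← tsum_subtype, tsum_range f hg]

theorem injective_cast_add_one_prod :
    Function.Injective fun p : ℕ × ℕ => ((p.1 : ℤ) + 1, (p.2 : ℤ) + 1) := by
  rintro ⟨a, b⟩ ⟨c, d⟩ h
  simpa using h

theorem range_cast_add_one_prod :
    (Set.range fun p : ℕ × ℕ => ((p.1 : ℤ) + 1, (p.2 : ℤ) + 1)) = Set.Ioi 0 ×ˢ Set.Ioi 0 := by
  ext ⟨m, n⟩
  simp only [Set.mem_range, Prod.mk.injEq, Prod.exists, Set.mem_prod, Set.mem_Ioi]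
  refine ⟨?_, fun _ => ⟨(m - 1).toNat, (n - 1).toNat, ?_⟩⟩
  · rintro ⟨a, b, rfl, rfl⟩
    omega
  · omega

theorem range_neg_cast_add_one_prod :
    (Set.range fun p : ℕ × ℕ => (-((p.1 : ℤ) + 1), -((p.2 : ℤ) + 1))) =
      Set.Iio 0 ×ˢ Set.Iio 0 := by
  ext ⟨m, n⟩
  simp only [Set.mem_range, Prod.mk.injEq, Prod.exists, Set.mem_prod, Set.mem_Iio]
  refine ⟨?_, fun _ => ⟨(-m - 1).toNat, (-n - 1).toNat, ?_⟩⟩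
  · rintro ⟨a, b, rfl, rfl⟩
    omega
  · omega

theorem tsum_indicator_sameSign {E : Type*} [NormedAddCommGroup E] [CompleteSpace E]
    {F : ℤ × ℤ → E} (hF : Summable F) :
    ∑' p, sameSign.indicator F p =
      ∑' p : ℕ × ℕ,
        (F ((p.1 : ℤ) + 1, (p.2 : ℤ) + 1) + F (-((p.1 : ℤ) + 1), -((p.2 : ℤ) + 1))) := by
  have hinj := injective_cast_add_one_prod
  have hinj_neg : Function.Injective fun p : ℕ × ℕ => (-((p.1 : ℤ) + 1), -((p.2 : ℤ) + 1)) :=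
    neg_injective.comp hinj
  have hdisj : Disjoint (Set.Ioi (0 : ℤ) ×ˢ Set.Ioi (0 : ℤ)) (Set.Iio 0 ×ˢ Set.Iio 0) :=
    Set.disjoint_prod.2 (.inl (Set.Ioi_disjoint_Iio_same))
  rw [sameSign, Set.indicator_union_of_disjoint hdisj, (hF.indicator _).tsum_add (hF.indicator _),
    ← range_cast_add_one_prod, ← range_neg_cast_add_one_prod, tsum_indicator_range hinj,
    tsum_indicator_range hinj_neg]
  exact ((hF.comp_injective hinj).tsum_add (hF.comp_injective hinj_neg)).symm

theorem three_mul_hamiltonian {T : ℤ → ℤ → ℤ → ℂ} {u : ℤ → ℂ}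
    (hTreal : ∀ k m n, T k m n = starRingEnd ℂ (T (-k) (-m) (-n)))
    (hTcyc : ∀ k m n, T k m n = T m n k) (hTzero : ∀ k m n, k * m * n = 0 → T k m n = 0)
    (hu : ∀ k, u (-k) = starRingEnd ℂ (u k)) (hsum : Summable (triad T u u u)) :
    3 * hamiltonian T u = ∑' p, triad T u u u p := by
  rw [tsum_eq_three_mul_tsum_indicator_sameSign hsum (triad_triadRotation hTcyc u u u)
    fun p hp => ?_, tsum_indicator_sameSign hsum, hamiltonian]
  · congr 1
    refine tsum_congr fun p => ?_
    generalize (p.1 : ℤ) + 1 = m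
    generalize (p.2 : ℤ) + 1 = n
    have hneg : -(-m + -n) = m + n := by ring
    simp only [triad, hneg, hTreal (m + n) (-m) (-n), neg_neg, hu]
    ring
  · rw [triad, hTzero _ _ _ (by linear_combination -hp)]
    ring

end Hamiltonian

section Estimates

/-- The growth condition of order `ν` with constant `C` on the interaction kernel `T`. -/
def KernelBound (ν C : ℝ) (T : ℤ → ℤ → ℤ → ℂ) : Prop :=
  ∀ k m n : ℤ, ‖T k m n‖ ≤
    C * (|(k : ℝ)| * |(m : ℝ)| * |(n : ℝ)|) ^ ((1 : ℝ) / 2) *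
      min (|(k : ℝ)| ^ (ν - 3 / 2)) (min (|(m : ℝ)| ^ (ν - 3 / 2)) (|(n : ℝ)| ^ (ν - 3 / 2)))

variable {ν C s D : ℝ} {T : ℤ → ℤ → ℤ → ℂ} {u : ℤ → ℂ}

theorem KernelBound.nonneg (hT : KernelBound ν C T) : 0 ≤ C := by
  simpa using (norm_nonneg _).trans (hT 1 1 1)

theorem KernelBound.eq_zero (hT : KernelBound ν C T) {k m n : ℤ} (h : k * m * n = 0) :
    T k m n = 0 := by
  have hprod : |(k : ℝ)| * |(m : ℝ)| * |(n : ℝ)| = 0 := by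
    rw [← abs_mul, ← abs_mul, abs_eq_zero]
    exact_mod_cast h
  simpa [hprod] using hT k m n

theorem min_le_sqrt_mul {x y : ℝ} (hx : 0 ≤ x) (hy : 0 ≤ y) : min x y ≤ √(x * y) :=
  Real.le_sqrt_of_sq_le <| by
    rw [sq]
    exact mul_le_mul (min_le_left x y) (min_le_right x y) (le_min hx hy) hx

theorem abs_add_le_two_mul_abs_mul_abs {m n : ℤ} (hm : m ≠ 0) (hn : n ≠ 0) :
    |m + n| ≤ 2 * (|m| * |n|) := by
  have hm' := Int.one_le_abs hm
  have hn' := Int.one_le_abs hn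
  nlinarith [abs_add_le m n]

theorem KernelBound.norm_le_of_add_eq_zero (hT : KernelBound ν C T) {k m n : ℤ} (h : k + m + n = 0)
    (hm : m ≠ 0) (hn : n ≠ 0) :
    ‖T k m n‖ ≤ 2 * C * (|(m : ℝ)| * |(n : ℝ)|) ^ (ν / 2 + 1 / 4) := by
  have hC := hT.nonneg
  have hmn : 0 < |(m : ℝ)| * |(n : ℝ)| := by positivity
  have hk : |(k : ℝ)| ≤ 2 * (|(m : ℝ)| * |(n : ℝ)|) := by
    obtain rfl : k = -(m + n) := by omega
    rw [Int.cast_neg, abs_neg]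
    exact_mod_cast abs_add_le_two_mul_abs_mul_abs hm hn
  have hroot : (|(k : ℝ)| * |(m : ℝ)| * |(n : ℝ)|) ^ ((1 : ℝ) / 2) ≤
      2 * (|(m : ℝ)| * |(n : ℝ)|) := by
    rw [← Real.sqrt_eq_rpow, mul_assoc]
    exact Real.sqrt_le_iff.2 ⟨by positivity, by nlinarith⟩
  have hmin : min (|(k : ℝ)| ^ (ν - 3 / 2))
      (min (|(m : ℝ)| ^ (ν - 3 / 2)) (|(n : ℝ)| ^ (ν - 3 / 2))) ≤
        (|(m : ℝ)| * |(n : ℝ)|) ^ (ν / 2 - 3 / 4) := by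
    refine (min_le_right _ _).trans ((min_le_sqrt_mul (by positivity) (by positivity)).trans_eq ?_)
    rw [← Real.mul_rpow (abs_nonneg _) (abs_nonneg _), Real.sqrt_eq_rpow, ← Real.rpow_mul hmn.le]
    ring_nf
  calc ‖T k m n‖
      ≤ C * (2 * (|(m : ℝ)| * |(n : ℝ)|)) * (|(m : ℝ)| * |(n : ℝ)|) ^ (ν / 2 - 3 / 4) :=
        (hT k m n).trans (by gcongr)
    _ = 2 * C * (|(m : ℝ)| * |(n : ℝ)|) ^ (1 + (ν / 2 - 3 / 4)) := by
        rw [Real.rpow_add hmn, Real.rpow_one]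
        ring
    _ = 2 * C * (|(m : ℝ)| * |(n : ℝ)|) ^ (ν / 2 + 1 / 4) := by ring_nf

theorem norm_le_mul_rpow_neg {E : Type*} [Norm E] {u : ℤ → E}
    (hu : ∀ k : ℤ, |(k : ℝ)| ^ s * ‖u k‖ ≤ D) {k : ℤ} (hk : k ≠ 0) :
    ‖u k‖ ≤ D * |(k : ℝ)| ^ (-s) := by
  rw [Real.rpow_neg (abs_nonneg _), ← div_eq_mul_inv, le_div_iff₀' (by positivity)]
  exact hu k

theorem KernelBound.norm_triad_one_le (hT : KernelBound ν C T)
    (hu : ∀ k : ℤ, |(k : ℝ)| ^ s * ‖u k‖ ≤ D) (p : ℤ × ℤ) :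
    ‖triad T 1 u u p‖ ≤ 2 * C * D ^ 2 *
      (|(p.1 : ℝ)| ^ (ν / 2 + 1 / 4 - s) * |(p.2 : ℝ)| ^ (ν / 2 + 1 / 4 - s)) := by
  obtain ⟨m, n⟩ := p
  have hC := hT.nonneg
  have hD : 0 ≤ D := (by positivity : (0 : ℝ) ≤ _).trans (hu 0)
  by_cases hmn : m = 0 ∨ n = 0
  · have hzero : T (-(m + n)) m n = 0 := hT.eq_zero (by grind)
    rw [triad, hzero]
    simp only [zero_mul, norm_zero]
    positivity
  obtain ⟨hm, hn⟩ := not_or.1 hmn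
  have hm' : 0 < |(m : ℝ)| := by positivity
  have hn' : 0 < |(n : ℝ)| := by positivity
  calc ‖triad T 1 u u (m, n)‖ = ‖T (-(m + n)) m n‖ * ‖u m‖ * ‖u n‖ := by simp [triad]
    _ ≤ 2 * C * (|(m : ℝ)| * |(n : ℝ)|) ^ (ν / 2 + 1 / 4) *
          (D * |(m : ℝ)| ^ (-s)) * (D * |(n : ℝ)| ^ (-s)) := by
        gcongr
        · exact hT.norm_le_of_add_eq_zero (by ring) hm hn
        · exact norm_le_mul_rpow_neg hu hm
        · exact norm_le_mul_rpow_neg hu hn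
    _ = _ := by
        rw [sub_eq_add_neg _ s, Real.rpow_add hm', Real.rpow_add hn',
          Real.mul_rpow hm'.le hn'.le]
        ring

theorem summable_abs_rpow_mul_abs_rpow {q : ℝ} (hq : q < -1) :
    Summable fun p : ℤ × ℤ => |(p.1 : ℝ)| ^ q * |(p.2 : ℝ)| ^ q := by
  have h : Summable fun k : ℤ => |(k : ℝ)| ^ q := by
    simpa only [neg_neg] using Real.summable_abs_int_rpow (lt_neg.1 hq)
  exact h.mul_of_nonneg h (fun k => by positivity) fun k => by positivity

theorem exists_forall_norm_le {E : Type*} [SeminormedAddGroup E] {u : ℤ → E} (hs : 0 ≤ s)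
    (hu : ∀ k : ℤ, |(k : ℝ)| ^ s * ‖u k‖ ≤ D) : ∃ K, ∀ k, ‖u k‖ ≤ K := by
  refine ⟨max ‖u 0‖ D, fun k => ?_⟩
  rcases eq_or_ne k 0 with rfl | hk
  · exact le_max_left _ _
  · have hone : 1 ≤ |(k : ℝ)| ^ s := Real.one_le_rpow (by exact_mod_cast Int.one_le_abs hk) hs
    exact (le_mul_of_one_le_left (norm_nonneg _) hone).trans ((hu k).trans (le_max_right _ _))

theorem rpow_mul_norm_le_sqrt {E : Type*} [SeminormedAddGroup E] {u : ℤ → E} {B : ℝ}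
    (hsum : Summable fun k : ℤ => |(k : ℝ)| ^ (2 * s) * ‖u k‖ ^ 2)
    (hB : ∑' k : ℤ, |(k : ℝ)| ^ (2 * s) * ‖u k‖ ^ 2 ≤ B) (k : ℤ) :
    |(k : ℝ)| ^ s * ‖u k‖ ≤ √B := by
  refine Real.le_sqrt_of_sq_le ?_
  have hsq : |(k : ℝ)| ^ (2 * s) = (|(k : ℝ)| ^ s) ^ 2 := by
    rw [mul_comm, Real.rpow_mul (abs_nonneg _), Real.rpow_two]
  rw [mul_pow, ← hsq]
  exact (hsum.le_tsum k fun j _ => by positivity).trans hB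

end Estimates

/-- The right-hand side of the spectral evolution equation `∂ₜφ(k) = velocity T φ k`. -/
noncomputable def velocity (T : ℤ → ℤ → ℤ → ℂ) (u : ℤ → ℂ) (k : ℤ) : ℂ :=
  -(Complex.I * (Int.sign k : ℂ) * triadConv T u k)

theorem norm_velocity_le (T : ℤ → ℤ → ℤ → ℂ) (u : ℤ → ℂ) (k : ℤ) :
    ‖velocity T u k‖ ≤ ‖triadConv T u k‖ := by
  have hsign : ‖(Int.sign k : ℂ)‖ ≤ 1 := by
    rcases Int.sign_trichotomy k with h | h | h <;> simp [h]
  rw [velocity, norm_neg, norm_mul, norm_mul, Complex.norm_I, one_mul]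
  exact mul_le_of_le_one_left (norm_nonneg _) hsign

theorem hamiltonian_conserved_general {ν C s D : ℝ} {T : ℤ → ℤ → ℤ → ℂ}
    (hTreal : ∀ k m n, T k m n = starRingEnd ℂ (T (-k) (-m) (-n)))
    (hTcyc : ∀ k m n, T k m n = T m n k) (hT : KernelBound ν C T)
    (hs : 0 ≤ s) (hνs : ν / 2 + 5 / 4 < s)
    {I : Set ℝ} (hI : IsOpen I) (hI' : IsPreconnected I) {φ : ℝ → ℤ → ℂ}
    (hconj : ∀ t ∈ I, ∀ k, φ t (-k) = starRingEnd ℂ (φ t k))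
    (hdecay : ∀ t ∈ I, ∀ k : ℤ, |(k : ℝ)| ^ s * ‖φ t k‖ ≤ D)
    (heq : ∀ t ∈ I, ∀ k, HasDerivAt (fun τ => φ τ k) (velocity T (φ t) k) t) :
    ∀ t ∈ I, ∀ t' ∈ I, hamiltonian T (φ t) = hamiltonian T (φ t') := by
  obtain ⟨W, hWsum, hW⟩ : ∃ W : ℤ × ℤ → ℝ, Summable W ∧
      ∀ t ∈ I, ∀ p, ‖triad T 1 (φ t) (φ t) p‖ ≤ W p :=
    ⟨_, (summable_abs_rpow_mul_abs_rpow (by linarith)).mul_left _,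
      fun t ht => hT.norm_triad_one_le (hdecay t ht)⟩
  have hsum : ∀ t ∈ I, Summable (triad T (φ t) (φ t) (φ t)) := fun t ht => by
    obtain ⟨K, hK⟩ := exists_forall_norm_le hs (hdecay t ht)
    exact .of_norm_bounded (hWsum.mul_left K) (norm_triad_le (hW t ht) fun _ => hK _)
  have hvel : ∀ t ∈ I, ∀ k, ‖velocity T (φ t) k‖ ≤ ∑' p, W p := fun t ht k =>
    (norm_velocity_le T (φ t) k).trans (norm_triadConv_le (hW t ht) hWsum k)
  have hodd : Function.Odd fun k : ℤ => -(Complex.I * (Int.sign k : ℂ)) := fun k => by simp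
  have hthree : ∀ t ∈ I, 3 * hamiltonian T (φ t) = ∑' p, triad T (φ t) (φ t) (φ t) p :=
    fun t ht =>
      three_mul_hamiltonian hTreal hTcyc (fun _ _ _ => hT.eq_zero) (hconj t ht) (hsum t ht)
  intro t ht t' ht'
  refine mul_left_cancel₀ (three_ne_zero (α := ℂ)) ?_
  rw [hthree t ht, hthree t' ht']
  exact tsum_triad_eq_of_hasDerivAt hTcyc hI hI' hodd (fun _ _ _ => (neg_mul _ _).symm) heq
    (hWsum.mul_left _) (fun τ hτ => norm_triad_le (hW τ hτ) fun _ => hvel τ hτ _) hsum ht ht'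

/-- Conservation of the Hamiltonian `ℋ` for solutions of the spectral evolution
equation; the sum runs over positive wavenumbers `m = p.1 + 1`, `n = p.2 + 1`. -/
theorem hamiltonian_conserved
    (ν : ℝ) (hν : 3 / 2 ≤ ν) (T : ℤ → ℤ → ℤ → ℂ)
    (hTreal : ∀ k m n : ℤ, T k m n = starRingEnd ℂ (T (-k) (-m) (-n)))
    (hTsym : ∀ k m n : ℤ, T k m n = T k n m)
    (hTcyc : ∀ k m n : ℤ, T k m n = T m n k)
    (hT0 : ∀ k m n : ℤ, k * m * n = 0 → T k m n = 0)
    (C : ℝ) (hC : 0 < C)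
    (hTbound : ∀ k m n : ℤ, ‖T k m n‖ ≤
      C * (|(k : ℝ)| * |(m : ℝ)| * |(n : ℝ)|) ^ ((1 : ℝ) / 2) *
        min (|(k : ℝ)| ^ (ν - 3 / 2)) (min (|(m : ℝ)| ^ (ν - 3 / 2)) (|(n : ℝ)| ^ (ν - 3 / 2))))
    (s : ℝ) (hs : ν + 1 / 2 < s)
    (a b : ℝ) (φ : ℝ → ℤ → ℂ)
    (hzero : ∀ t ∈ Set.Ioo a b, φ t 0 = 0)
    (hconj : ∀ t ∈ Set.Ioo a b, ∀ k : ℤ, φ t (-k) = starRingEnd ℂ (φ t k))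
    (hsummable : ∀ t ∈ Set.Ioo a b,
      Summable fun k : ℤ => |(k : ℝ)| ^ (2 * s) * ‖φ t k‖ ^ 2)
    (hbound : ∃ B : ℝ, ∀ t ∈ Set.Ioo a b,
      (∑' k : ℤ, |(k : ℝ)| ^ (2 * s) * ‖φ t k‖ ^ 2) ≤ B)
    (hcont : HsContOn s φ (Set.Ioo a b))
    (heq : ∀ t ∈ Set.Ioo a b, ∀ k : ℤ,
      HasDerivAt (fun τ => φ τ k)
        (-(Complex.I * (Int.sign k : ℂ) *
          ∑' n : ℤ, T (-k) (k - n) n * φ t (k - n) * φ t n)) t) :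
    ∀ t ∈ Set.Ioo a b, ∀ t' ∈ Set.Ioo a b,
      (∑' p : ℕ × ℕ,
        (T (-(((p.1 : ℤ) + 1) + ((p.2 : ℤ) + 1))) ((p.1 : ℤ) + 1) ((p.2 : ℤ) + 1) *
            starRingEnd ℂ (φ t (((p.1 : ℤ) + 1) + ((p.2 : ℤ) + 1))) *
            φ t ((p.1 : ℤ) + 1) * φ t ((p.2 : ℤ) + 1) +
          starRingEnd ℂ
              (T (-(((p.1 : ℤ) + 1) + ((p.2 : ℤ) + 1))) ((p.1 : ℤ) + 1) ((p.2 : ℤ) + 1)) *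
            starRingEnd ℂ (φ t ((p.1 : ℤ) + 1)) * starRingEnd ℂ (φ t ((p.2 : ℤ) + 1)) *
            φ t (((p.1 : ℤ) + 1) + ((p.2 : ℤ) + 1)))) =
      ∑' p : ℕ × ℕ,
        (T (-(((p.1 : ℤ) + 1) + ((p.2 : ℤ) + 1))) ((p.1 : ℤ) + 1) ((p.2 : ℤ) + 1) *
            starRingEnd ℂ (φ t' (((p.1 : ℤ) + 1) + ((p.2 : ℤ) + 1))) *
            φ t' ((p.1 : ℤ) + 1) * φ t' ((p.2 : ℤ) + 1) +
          starRingEnd ℂ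
              (T (-(((p.1 : ℤ) + 1) + ((p.2 : ℤ) + 1))) ((p.1 : ℤ) + 1) ((p.2 : ℤ) + 1)) *
            starRingEnd ℂ (φ t' ((p.1 : ℤ) + 1)) * starRingEnd ℂ (φ t' ((p.2 : ℤ) + 1)) *
            φ t' (((p.1 : ℤ) + 1) + ((p.2 : ℤ) + 1))) := by
  obtain ⟨B, hB⟩ := hbound
  exact hamiltonian_conserved_general hTreal hTcyc hTbound (by linarith) (by linarith) isOpen_Ioo
    isPreconnected_Ioo hconj (fun t ht => rpow_mul_norm_le_sqrt (hsummable t ht) (hB t ht)) heq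
end

section
/- Let 0 < r < 1 and α, β, γ ∈ ℝ, and define the Rayleigh-wave kernel T : ℤ³ → ℝ for kmn ≠ 0 by T(k,m,n) = α|kmn|/(|k| + r|m| + r|n|) + α|kmn|/(r|k| + |m| + r|n|) + α|kmn|/(r|k| + r|m| + |n|) + β|kmn|/(r|k| + |m| + |n|) + β|kmn|/(|k| + r|m| + |n|) + β|kmn|/(|k| + |m| + r|n|) + γ|kmn|/(|k| + |m| + |n|), and T(k,m,n) = 0 when kmn = 0. Then T satisfies the bound |T(k,m,n)| ≤ C |kmn|^{1/2} min{|k|^{1/2}, |m|^{1/2}, |n|^{1/2}} for all k, m, n ∈ ℤ, with C = (1/2)(3|α|/r + 3|β|/r + |γ|). -/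
/-!
By AM-GM, `2√(abc) ≤ (a + b)√c ≤ (a + b + c)√c` for nonnegative `a`, `b`, `c`; by symmetry `√c` may
be replaced with the least of `√a`, `√b`, `√c`. Multiplying by `√(abc)` bounds `abc / (a + b + c)`.
Weights `≥ q` in the denominator cost a factor `1 / q`, and the kernel is a linear combination of
seven such weighted quotients: six with `q = r`, whose coefficients are `α` or `β`, and one with
`q = 1`, whose coefficient is `γ`.
-/

section Moduli

variable {a b c : ℝ}

lemma two_mul_sqrt_mul_le_add (ha : 0 ≤ a) (hb : 0 ≤ b) : 2 * √(a * b) ≤ a + b := by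
  simpa only [Real.sqrt_mul ha, mul_assoc, Real.sq_sqrt ha, Real.sq_sqrt hb]
    using two_mul_le_add_sq √a √b

lemma two_mul_sqrt_mul_mul_le_add_mul_sqrt (ha : 0 ≤ a) (hb : 0 ≤ b) (hc : 0 ≤ c) :
    2 * √(a * b * c) ≤ (a + b + c) * √c :=
  calc
    2 * √(a * b * c) = 2 * √(a * b) * √c := by rw [Real.sqrt_mul' _ hc, mul_assoc]
    _ ≤ (a + b) * √c := by gcongr; exact two_mul_sqrt_mul_le_add ha hb
    _ ≤ (a + b + c) * √c := by gcongr ?_ * √c; exact le_add_of_nonneg_right hc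

lemma two_mul_sqrt_mul_mul_le_add_mul_min (ha : 0 ≤ a) (hb : 0 ≤ b) (hc : 0 ≤ c) :
    2 * √(a * b * c) ≤ (a + b + c) * min √a (min √b √c) := by
  have le_a : 2 * √(a * b * c) ≤ (a + b + c) * √a := by
    rw [mul_rotate a b c, add_rotate a b c]
    exact two_mul_sqrt_mul_mul_le_add_mul_sqrt hb hc ha
  have le_b : 2 * √(a * b * c) ≤ (a + b + c) * √b := by
    rw [mul_right_comm a b c, add_right_comm a b c]
    exact two_mul_sqrt_mul_mul_le_add_mul_sqrt ha hc hb
  have le_c : 2 * √(a * b * c) ≤ (a + b + c) * √c :=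
    two_mul_sqrt_mul_mul_le_add_mul_sqrt ha hb hc
  have sum_nonneg : 0 ≤ a + b + c := by positivity
  rw [mul_min_of_nonneg _ _ sum_nonneg, mul_min_of_nonneg _ _ sum_nonneg]
  exact le_min le_a (le_min le_b le_c)

lemma two_mul_mul_mul_le_add_mul_sqrt_mul_min (ha : 0 ≤ a) (hb : 0 ≤ b) (hc : 0 ≤ c) :
    2 * (a * b * c) ≤ (a + b + c) * (√(a * b * c) * min √a (min √b √c)) :=
  calc
    2 * (a * b * c) = √(a * b * c) * (2 * √(a * b * c)) := by
      rw [mul_left_comm √(a * b * c), Real.mul_self_sqrt (by positivity)]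
    _ ≤ √(a * b * c) * ((a + b + c) * min √a (min √b √c)) := by
      gcongr √(a * b * c) * ?_
      exact two_mul_sqrt_mul_mul_le_add_mul_min ha hb hc
    _ = (a + b + c) * (√(a * b * c) * min √a (min √b √c)) := mul_left_comm _ _ _

end Moduli

/-- The quotient `|xyz| / (u|x| + v|y| + w|z|)`, the building block of the Rayleigh-wave kernel.
It vanishes when `xyz = 0`, including `x = y = z = 0`, where it reads `0 / 0 = 0`. -/
noncomputable def weightedQuotient (u v w x y z : ℝ) : ℝ :=
  |x| * |y| * |z| / (u * |x| + v * |y| + w * |z|)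

/-- The sum of the weighted quotients in which one wave number has weight `s` and the other two have
weight `t`. The coefficients `α` and `β` of the kernel multiply the cases `(s, t) = (1, r)` and
`(s, t) = (r, 1)`. -/
noncomputable def weightedQuotientSum (s t x y z : ℝ) : ℝ :=
  weightedQuotient s t t x y z + weightedQuotient t s t x y z + weightedQuotient t t s x y z

/-- The bound `|xyz|^{1/2} min {|x|^{1/2}, |y|^{1/2}, |z|^{1/2}}` on interaction coefficients, up to
a constant factor. -/
noncomputable def interactionBound (x y z : ℝ) : ℝ :=
  √(|x| * |y| * |z|) * min √|x| (min √|y| √|z|)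

/-- The Rayleigh-wave kernel `T`, with real instead of integer wave numbers. The convention
`T(x,y,z) = 0` for `xyz = 0` needs no case distinction, see `rayleighKernel_eq_zero`. -/
noncomputable def rayleighKernel (r α β γ x y z : ℝ) : ℝ :=
  α * weightedQuotientSum 1 r x y z + β * weightedQuotientSum r 1 x y z +
    γ * weightedQuotient 1 1 1 x y z

lemma weightedQuotient_eq_zero {x y z : ℝ} (h : x * y * z = 0) (u v w : ℝ) :
    weightedQuotient u v w x y z = 0 := by
  rw [weightedQuotient, ← abs_mul, ← abs_mul, h, abs_zero, zero_div]

lemma rayleighKernel_eq_zero {x y z : ℝ} (h : x * y * z = 0) (r α β γ : ℝ) :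
    rayleighKernel r α β γ x y z = 0 := by
  simp only [rayleighKernel, weightedQuotientSum, weightedQuotient_eq_zero h, add_zero, mul_zero]

lemma abs_weightedQuotient_le {q u v w : ℝ} (hq : 0 < q) (hu : q ≤ u) (hv : q ≤ v) (hw : q ≤ w)
    (x y z : ℝ) : |weightedQuotient u v w x y z| ≤ interactionBound x y z / (2 * q) := by
  have bound_nonneg : 0 ≤ interactionBound x y z := by unfold interactionBound; positivity
  have hu₀ : 0 ≤ u := hq.le.trans hu
  have hv₀ : 0 ≤ v := hq.le.trans hv
  have hw₀ : 0 ≤ w := hq.le.trans hw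
  have two_mul_numerator_le :
      2 * (|x| * |y| * |z|) ≤ (|x| + |y| + |z|) * interactionBound x y z :=
    two_mul_mul_mul_le_add_mul_sqrt_mul_min (abs_nonneg x) (abs_nonneg y) (abs_nonneg z)
  have le_denominator : q * (|x| + |y| + |z|) ≤ u * |x| + v * |y| + w * |z| := by
    rw [mul_add, mul_add]; gcongr
  rw [weightedQuotient, abs_of_nonneg (by positivity)]
  refine div_le_of_le_mul₀ (by positivity) (by positivity) ?_
  calc
    |x| * |y| * |z| ≤ (|x| + |y| + |z|) * interactionBound x y z / 2 := by linarith
    _ = interactionBound x y z / (2 * q) * (q * (|x| + |y| + |z|)) := by field_simp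
    _ ≤ interactionBound x y z / (2 * q) * (u * |x| + v * |y| + w * |z|) := by gcongr

lemma abs_weightedQuotientSum_le {q s t : ℝ} (hq : 0 < q) (hs : q ≤ s) (ht : q ≤ t) (x y z : ℝ) :
    |weightedQuotientSum s t x y z| ≤ 3 * (interactionBound x y z / (2 * q)) := by
  have first_le := abs_weightedQuotient_le hq hs ht ht x y z
  have second_le := abs_weightedQuotient_le hq ht hs ht x y z
  have third_le := abs_weightedQuotient_le hq ht ht hs x y z
  unfold weightedQuotientSum
  linarith [abs_add_three (weightedQuotient s t t x y z) (weightedQuotient t s t x y z)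
    (weightedQuotient t t s x y z)]

theorem rayleigh_kernel_bound_general {r : ℝ} (hr0 : 0 < r) (hr1 : r ≤ 1) (α β γ x y z : ℝ) :
    |rayleighKernel r α β γ x y z| ≤
      (1 / 2) * (3 * |α| / r + 3 * |β| / r + |γ|) * interactionBound x y z := by
  set B := interactionBound x y z
  have alpha_sum_le : |weightedQuotientSum 1 r x y z| ≤ 3 * (B / (2 * r)) :=
    abs_weightedQuotientSum_le hr0 hr1 le_rfl x y z
  have beta_sum_le : |weightedQuotientSum r 1 x y z| ≤ 3 * (B / (2 * r)) :=
    abs_weightedQuotientSum_le hr0 le_rfl hr1 x y z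
  have gamma_quotient_le : |weightedQuotient 1 1 1 x y z| ≤ B / (2 * 1) :=
    abs_weightedQuotient_le one_pos le_rfl le_rfl le_rfl x y z
  calc
    |rayleighKernel r α β γ x y z|
      ≤ |α| * |weightedQuotientSum 1 r x y z| + |β| * |weightedQuotientSum r 1 x y z| +
          |γ| * |weightedQuotient 1 1 1 x y z| := by
      simpa only [rayleighKernel, abs_mul] using abs_add_three (α * weightedQuotientSum 1 r x y z)
        (β * weightedQuotientSum r 1 x y z) (γ * weightedQuotient 1 1 1 x y z)
    _ ≤ |α| * (3 * (B / (2 * r))) + |β| * (3 * (B / (2 * r))) + |γ| * (B / (2 * 1)) := by gcongr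
    _ = (1 / 2) * (3 * |α| / r + 3 * |β| / r + |γ|) * B := by ring

/-- The Rayleigh-wave kernel satisfies the interaction-coefficient bound
`|T(k,m,n)| ≤ C |kmn|^{1/2} min{|k|^{1/2},|m|^{1/2},|n|^{1/2}}` with
`C = (1/2)(3|α|/r + 3|β|/r + |γ|)`. -/
theorem rayleigh_kernel_bound
    (r α β γ : ℝ) (hr0 : 0 < r) (hr1 : r < 1)
    (T : ℤ → ℤ → ℤ → ℝ)
    (hT : ∀ k m n : ℤ, k * m * n ≠ 0 →
      T k m n =
        α * (|(k : ℝ)| * |(m : ℝ)| * |(n : ℝ)|) / (|(k : ℝ)| + r * |(m : ℝ)| + r * |(n : ℝ)|) +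
        α * (|(k : ℝ)| * |(m : ℝ)| * |(n : ℝ)|) / (r * |(k : ℝ)| + |(m : ℝ)| + r * |(n : ℝ)|) +
        α * (|(k : ℝ)| * |(m : ℝ)| * |(n : ℝ)|) / (r * |(k : ℝ)| + r * |(m : ℝ)| + |(n : ℝ)|) +
        β * (|(k : ℝ)| * |(m : ℝ)| * |(n : ℝ)|) / (r * |(k : ℝ)| + |(m : ℝ)| + |(n : ℝ)|) +
        β * (|(k : ℝ)| * |(m : ℝ)| * |(n : ℝ)|) / (|(k : ℝ)| + r * |(m : ℝ)| + |(n : ℝ)|) +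
        β * (|(k : ℝ)| * |(m : ℝ)| * |(n : ℝ)|) / (|(k : ℝ)| + |(m : ℝ)| + r * |(n : ℝ)|) +
        γ * (|(k : ℝ)| * |(m : ℝ)| * |(n : ℝ)|) / (|(k : ℝ)| + |(m : ℝ)| + |(n : ℝ)|))
    (hT0 : ∀ k m n : ℤ, k * m * n = 0 → T k m n = 0) :
    ∀ k m n : ℤ,
      |T k m n| ≤ (1 / 2) * (3 * |α| / r + 3 * |β| / r + |γ|) *
        ((|(k : ℝ)| * |(m : ℝ)| * |(n : ℝ)|) ^ ((1 : ℝ) / 2) *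
          min (|(k : ℝ)| ^ ((1 : ℝ) / 2))
            (min (|(m : ℝ)| ^ ((1 : ℝ) / 2)) (|(n : ℝ)| ^ ((1 : ℝ) / 2)))) := by
  intro k m n
  have T_eq : T k m n = rayleighKernel r α β γ k m n := by
    by_cases h : k * m * n = 0
    · rw [hT0 k m n h, rayleighKernel_eq_zero (mod_cast h)]
    · rw [hT k m n h]
      simp only [rayleighKernel, weightedQuotientSum, weightedQuotient, one_mul]
      ring
  simpa only [T_eq, interactionBound, Real.sqrt_eq_rpow] using
    rayleigh_kernel_bound_general hr0 hr1.le α β γ k m n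
end

section
/- Define the Hunter–Saxton kernel S : ℤ³ → ℂ by S(k,m,n) = (1/2)(1/(ik) + 1/(im) + 1/(in)) for kmn ≠ 0 and S(k,m,n) = 0 otherwise. Let û : ℤ → ℂ satisfy û(0) = 0 and Σ_{k∈ℤ} |û(k)| < ∞. Then for every k ∈ ℤ with k ≠ 0, the absolutely convergent sums satisfy ik Σ_{n∈ℤ} S(−k, k−n, n) û(k−n) û(n) = ik Σ_{n∈ℤ, n≠0} û(k−n)·(û(n)/(in)) − (1/2) Σ_{n∈ℤ} û(k−n) û(n). In other words, the noncanonical evolution equation u_t + a(u,u)_x = 0 with this kernel coincides, in Fourier coefficients, with the derivative Hunter–Saxton equation u_t + (u ∂_x^{−1} u)_x − (1/2)(u² − ⟨u²⟩) = 0, where ∂_x^{−1} has Fourier symbol 1/(in) on zero-mean functions and ⟨·⟩ denotes the spatial mean. -/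
open scoped BigOperators

/-!
The bilinear form `a` only evaluates the kernel on triads `(-k, k - n, n)` of frequencies of sum
zero. There `S` equals `(1/2)(1/(ik) + 1/(im) + 1/(in))` with the convention `1/0 = 0`, even when
some frequency vanishes, because the other two are then opposite. Hence, in physical space,
`a(u, v) = (1/2)(u ∂ₓ⁻¹v + (∂ₓ⁻¹u) v - ∂ₓ⁻¹(uv))`; setting `v = u` and differentiating gives the
equation, the mean of `u²` being lost in `∂ₓ ∂ₓ⁻¹`.
-/

section Convolution

variable {G R : Type*}

theorem summable_convolution_of_summable_norm [AddGroup G] [NormedRing R] [CompleteSpace R]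
    {f g : G → R} (hf : Summable fun n => ‖f n‖) (hg : Summable fun n => ‖g n‖) (k : G) :
    Summable fun n => f (k - n) * g n :=
  (summable_mul_of_summable_norm hf hg).comp_injective (i := fun n => (k - n, n))
    fun _ _ h => congrArg Prod.snd h

theorem tsum_convolution_comm [AddCommGroup G] [NonUnitalNonAssocCommSemiring R]
    [TopologicalSpace R] (f g : G → R) (k : G) :
    ∑' n, f (k - n) * g n = ∑' n, g (k - n) * f n := by
  rw [← (Equiv.subLeft k).tsum_eq fun n => f (k - n) * g n]
  simp only [Equiv.subLeft_apply, sub_sub_cancel, mul_comm]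

end Convolution

/-- The action of `∂ₓ⁻¹` on Fourier coefficients. Division by zero makes the mean of the
antiderivative vanish. -/
noncomputable def antiderivCoeff (u : ℤ → ℂ) (n : ℤ) : ℂ :=
  u n / (Complex.I * n)

theorem antiderivCoeff_zero (u : ℤ → ℂ) : antiderivCoeff u 0 = 0 := by
  simp [antiderivCoeff]

theorem norm_antiderivCoeff_le (u : ℤ → ℂ) (n : ℤ) : ‖antiderivCoeff u n‖ ≤ ‖u n‖ := by
  rcases eq_or_ne n 0 with rfl | hn
  · simp [antiderivCoeff_zero]
  · rw [antiderivCoeff, norm_div, norm_mul, Complex.norm_I, one_mul, Complex.norm_intCast]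
    exact div_le_self (norm_nonneg _) (mod_cast Int.one_le_abs hn)

theorem tsum_ne_zero_mul_antiderivCoeff (w u : ℤ → ℂ) :
    ∑' n : {n : ℤ // n ≠ 0}, w n * antiderivCoeff u n = ∑' n, w n * antiderivCoeff u n := by
  refine tsum_subtype_eq_of_support_subset (s := {n : ℤ | n ≠ 0})
    (f := fun n => w n * antiderivCoeff u n) fun n hn h0 => hn ?_
  simp only [h0, antiderivCoeff_zero, mul_zero]

/-- The kernel `S` of the Hunter–Saxton equation in noncanonical form, set to zero as soon as one
of the three frequencies vanishes. -/
noncomputable def hunterSaxtonKernel (k m n : ℤ) : ℂ :=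
  if k * m * n = 0 then 0
  else (1 / 2) * (1 / (Complex.I * k) + 1 / (Complex.I * m) + 1 / (Complex.I * n))

theorem eq_hunterSaxtonKernel {S : ℤ → ℤ → ℤ → ℂ}
    (hS : ∀ k m n : ℤ, k * m * n ≠ 0 →
      S k m n = (1 / 2) * (1 / (Complex.I * k) + 1 / (Complex.I * m) + 1 / (Complex.I * n)))
    (hS0 : ∀ k m n : ℤ, k * m * n = 0 → S k m n = 0) :
    S = hunterSaxtonKernel := by
  funext k m n
  rw [hunterSaxtonKernel]
  split_ifs with h
  exacts [hS0 k m n h, hS k m n h]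

theorem hunterSaxtonKernel_of_add_eq_zero {k m n : ℤ} (h : k + m + n = 0) :
    hunterSaxtonKernel k m n =
      (1 / 2) * (1 / (Complex.I * k) + 1 / (Complex.I * m) + 1 / (Complex.I * n)) := by
  obtain rfl : n = -k - m := by lia
  rw [hunterSaxtonKernel]
  split_ifs with h0
  · rcases mul_eq_zero.mp h0 with hkm | hn
    · rcases mul_eq_zero.mp hkm with rfl | rfl <;> simp
    · obtain rfl : m = -k := by lia
      simp
  · rfl

theorem hunterSaxtonKernel_mul_mul (u v : ℤ → ℂ) (k n : ℤ) :
    hunterSaxtonKernel (-k) (k - n) n * u (k - n) * v n =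
      (1 / 2) * (u (k - n) * antiderivCoeff v n + antiderivCoeff u (k - n) * v n -
        u (k - n) * v n / (Complex.I * k)) := by
  rw [hunterSaxtonKernel_of_add_eq_zero (by ring), antiderivCoeff, antiderivCoeff, Int.cast_neg]
  ring

theorem hasSum_hunterSaxtonKernel_mul_mul {u v : ℤ → ℂ} {k : ℤ}
    (huv : Summable fun n => u (k - n) * v n) :
    HasSum (fun n => hunterSaxtonKernel (-k) (k - n) n * u (k - n) * v n)
      ((1 / 2) * (∑' n, u (k - n) * antiderivCoeff v n + ∑' n, antiderivCoeff u (k - n) * v n -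
        (∑' n, u (k - n) * v n) / (Complex.I * k))) := by
  have hright : Summable fun n => u (k - n) * antiderivCoeff v n :=
    .of_norm_bounded huv.norm fun n => by
      simpa only [norm_mul] using
        mul_le_mul_of_nonneg_left (norm_antiderivCoeff_le v n) (norm_nonneg _)
  have hleft : Summable fun n => antiderivCoeff u (k - n) * v n :=
    .of_norm_bounded huv.norm fun n => by
      simpa only [norm_mul] using
        mul_le_mul_of_nonneg_right (norm_antiderivCoeff_le u (k - n)) (norm_nonneg _)
  simp only [hunterSaxtonKernel_mul_mul]
  exact ((hright.hasSum.add hleft.hasSum).sub (huv.hasSum.div_const _)).mul_left _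

theorem tsum_hunterSaxtonKernel_mul_self {u : ℤ → ℂ} {k : ℤ}
    (hu : Summable fun n => u (k - n) * u n) :
    ∑' n, hunterSaxtonKernel (-k) (k - n) n * u (k - n) * u n =
      ∑' n, u (k - n) * antiderivCoeff u n -
        (1 / 2) * ((∑' n, u (k - n) * u n) / (Complex.I * k)) := by
  rw [(hasSum_hunterSaxtonKernel_mul_mul hu).tsum_eq, tsum_convolution_comm (antiderivCoeff u) u]
  ring

theorem hunter_saxton_spectral_form_general
    (S : ℤ → ℤ → ℤ → ℂ)
    (hS : ∀ k m n : ℤ, k * m * n ≠ 0 →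
      S k m n = (1 / 2) * (1 / (Complex.I * (k : ℂ)) + 1 / (Complex.I * (m : ℂ)) +
        1 / (Complex.I * (n : ℂ))))
    (hS0 : ∀ k m n : ℤ, k * m * n = 0 → S k m n = 0)
    (u : ℤ → ℂ) {k : ℤ} (hk : k ≠ 0) (hu : Summable fun n : ℤ => u (k - n) * u n) :
    Complex.I * (k : ℂ) * ∑' n : ℤ, S (-k) (k - n) n * u (k - n) * u n =
      Complex.I * (k : ℂ) *
          (∑' n : {n : ℤ // n ≠ 0}, u (k - (n : ℤ)) * (u (n : ℤ) / (Complex.I * ((n : ℤ) : ℂ)))) -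
        (1 / 2) * ∑' n : ℤ, u (k - n) * u n := by
  obtain rfl : S = hunterSaxtonKernel := eq_hunterSaxtonKernel hS hS0
  have hIk : Complex.I * (k : ℂ) ≠ 0 := mul_ne_zero Complex.I_ne_zero (mod_cast hk)
  have hrestrict : ∑' n : {n : ℤ // n ≠ 0}, u (k - n) * (u n / (Complex.I * (n : ℤ))) =
      ∑' n, u (k - n) * antiderivCoeff u n :=
    tsum_ne_zero_mul_antiderivCoeff (fun n => u (k - n)) u
  rw [tsum_hunterSaxtonKernel_mul_self hu, hrestrict, mul_sub, mul_left_comm _ (1 / 2 : ℂ),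
    mul_div_cancel₀ _ hIk]

/-- The noncanonical equation for the Hunter–Saxton kernel
`S(k,m,n) = (1/2)(1/(ik) + 1/(im) + 1/(in))` coincides, in Fourier coefficients,
with the derivative Hunter–Saxton equation
`u_t + (u ∂_x^{−1} u)_x − (1/2)(u² − ⟨u²⟩) = 0`. -/
theorem hunter_saxton_spectral_form
    (S : ℤ → ℤ → ℤ → ℂ)
    (hS : ∀ k m n : ℤ, k * m * n ≠ 0 →
      S k m n = (1 / 2) * (1 / (Complex.I * (k : ℂ)) + 1 / (Complex.I * (m : ℂ)) +
        1 / (Complex.I * (n : ℂ))))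
    (hS0 : ∀ k m n : ℤ, k * m * n = 0 → S k m n = 0)
    (u : ℤ → ℂ) (hu0 : u 0 = 0) (hu1 : Summable fun k : ℤ => ‖u k‖) :
    ∀ k : ℤ, k ≠ 0 →
      Complex.I * (k : ℂ) * ∑' n : ℤ, S (-k) (k - n) n * u (k - n) * u n =
        Complex.I * (k : ℂ) *
            (∑' n : {n : ℤ // n ≠ 0}, u (k - (n : ℤ)) * (u (n : ℤ) / (Complex.I * ((n : ℤ) : ℂ)))) -
          (1 / 2) * ∑' n : ℤ, u (k - n) * u n :=
  fun k hk => hunter_saxton_spectral_form_general S hS hS0 u hk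
    (summable_convolution_of_summable_norm hu1 hu1 k)
end
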